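/- arXiv:2503.06224 — 3 statements merged into one kernel-verified Lean document; each statement's English description precedes it below -/
import Mathlib

section
/- For every ε > 0 there exists a constant C = C(ε) > 0 such that for every prime p, every integer l ≥ 0, every z ∈ ℍ with Im z ≥ 1, every g ∈ SL₂(ℤ), every δ' with 0 < δ' < 1, every real X ≥ 1, and every finite set 𝒫 of primes with 𝒫 ⊆ [X, 2X] and p ∉ 𝒫, one has Σ_{(l₁,l₂) ∈ 𝒫×𝒫} M_*(z, g; δ', p^l, (l₁·l₂)²) ≤ C·X^{2+ε}·( 1 + √δ'·X²·(Im z)/p^l + δ'·X⁴/p^l ). -/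
/-- The hyperbolic point-pair invariant `u(z,w) = |z−w|² / (Im z · Im w)`. -/
noncomputable def uInv (z w : ℂ) : ℝ := ‖z - w‖ ^ 2 / (z.im * w.im)

/-- The Möbius action of an integer matrix on the upper half-plane. -/
noncomputable def moeb (γ : Matrix (Fin 2) (Fin 2) ℤ) (z : ℂ) : ℂ :=
  (((γ 0 0 : ℤ) : ℂ) * z + ((γ 0 1 : ℤ) : ℂ)) / (((γ 1 0 : ℤ) : ℂ) * z + ((γ 1 1 : ℤ) : ℂ))

/-- `M(z,g;δ,L,m)`: the number of matrices `γ ∈ M₂(ℤ)` with `det γ = m`, `u(γ·z, z) ≤ δ`,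
and both off-diagonal entries of `g⁻¹γg` divisible by `L`. -/
noncomputable def Mcount (z : ℂ) (g : Matrix.SpecialLinearGroup (Fin 2) ℤ) (δ : ℝ)
    (L m : ℕ) : ℕ :=
  Set.ncard {γ : Matrix (Fin 2) (Fin 2) ℤ | γ.det = (m : ℤ) ∧ uInv (moeb γ z) z ≤ δ ∧
    (L : ℤ) ∣ (((g⁻¹ : Matrix.SpecialLinearGroup (Fin 2) ℤ) : Matrix (Fin 2) (Fin 2) ℤ) * γ *
      (g : Matrix (Fin 2) (Fin 2) ℤ)) 0 1 ∧
    (L : ℤ) ∣ (((g⁻¹ : Matrix.SpecialLinearGroup (Fin 2) ℤ) : Matrix (Fin 2) (Fin 2) ℤ) * γ *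
      (g : Matrix (Fin 2) (Fin 2) ℤ)) 1 0}

/-- `M_par(z,g;δ,L,m)`: those matrices counted by `M(z,g;δ,L,m)` that are moreover parabolic
(`(tr γ)² = 4m`) with nonzero lower-left entry. -/
noncomputable def Mpar (z : ℂ) (g : Matrix.SpecialLinearGroup (Fin 2) ℤ) (δ : ℝ)
    (L m : ℕ) : ℕ :=
  Set.ncard {γ : Matrix (Fin 2) (Fin 2) ℤ | γ.det = (m : ℤ) ∧ uInv (moeb γ z) z ≤ δ ∧
    ((L : ℤ) ∣ (((g⁻¹ : Matrix.SpecialLinearGroup (Fin 2) ℤ) : Matrix (Fin 2) (Fin 2) ℤ) * γ *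
      (g : Matrix (Fin 2) (Fin 2) ℤ)) 0 1 ∧
    (L : ℤ) ∣ (((g⁻¹ : Matrix.SpecialLinearGroup (Fin 2) ℤ) : Matrix (Fin 2) (Fin 2) ℤ) * γ *
      (g : Matrix (Fin 2) (Fin 2) ℤ)) 1 0) ∧
    γ.trace ^ 2 = 4 * (m : ℤ) ∧ γ 1 0 ≠ 0}

/-- `M_* = M − M_par`. -/
noncomputable def Mstar (z : ℂ) (g : Matrix.SpecialLinearGroup (Fin 2) ℤ) (δ : ℝ)
    (L m : ℕ) : ℕ :=
  Mcount z g δ L m - Mpar z g δ L m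

/-!
Write `γ = !![a, b; c, d]` and `Q(z) = c z² - (a - d) z - b`. If `det γ = n²` then
`u(γ z, z) = |Q(z)|² / (n Im z)²`, so closeness bounds `c` and places `a - d`, and then `b`, in
short intervals. Since `Q` and the congruence conditions see only `γ` modulo scalars, one first
counts the reduced matrices `A = γ - d`. The congruences force `e ∣ c` with `e = gcd(L, g₁₀ g₁₁)`;
for fixed `c` they determine `a - d` modulo `L / e`, and for fixed `c` and `a - d` they determine
`b` modulo `L`. This yields `O(N (1 + √δ N Im z / L + δ N² / L))` reduced matrices, uniformly in
`n ≤ N`.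

A reduced matrix with discriminant `D ≠ 0` comes from few pairs `(n, γ)`, because
`(tr γ)² - (2n)² = D` and the divisor bound applies; the same bound controls the number of ways to
write `n = l₁ l₂`. When `D = 0`, the matrices left after removing `M_par` are upper triangular with
diagonal `±n` and are counted directly by `L ∣ b`.
-/

open scoped Finset

theorem natCast_add_one_le_mul_rpow {η x : ℝ} (hη : 0 < η) (hx : 2 ≤ x) (v : ℕ) :
    (v : ℝ) + 1 ≤ (1 + 1 / (η * Real.log 2)) * (x ^ v) ^ η := by
  set t : ℝ := η * Real.log 2
  have ht : 0 < t := mul_pos hη (Real.log_pos one_lt_two)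
  have hbase : 1 + t ≤ x ^ η :=
    calc 1 + t ≤ Real.exp t := by linarith [Real.add_one_le_exp t]
      _ = 2 ^ η := by rw [Real.rpow_def_of_pos two_pos, mul_comm]
      _ ≤ x ^ η := by gcongr
  have hpow : 1 + v * t ≤ (x ^ v) ^ η :=
    calc 1 + v * t ≤ (1 + t) ^ v := one_add_mul_le_pow (by linarith) v
      _ ≤ (x ^ η) ^ v := by gcongr
      _ = (x ^ v) ^ η := Real.rpow_pow_comm (by linarith) η v
  calc (v : ℝ) + 1 ≤ v + 1 + (v * t + 1 / t) := le_add_of_nonneg_right (by positivity)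
    _ = (1 + 1 / t) * (1 + v * t) := by field_simp; ring
    _ ≤ (1 + 1 / t) * (x ^ v) ^ η := by gcongr

theorem natCast_add_one_le_rpow {η x : ℝ} (hx : 0 ≤ x) (hxη : 2 ≤ x ^ η) (v : ℕ) :
    (v : ℝ) + 1 ≤ (x ^ v) ^ η :=
  calc (v : ℝ) + 1 ≤ 2 ^ v := by exact_mod_cast Nat.lt_two_pow_self
    _ ≤ (x ^ η) ^ v := by gcongr
    _ = (x ^ v) ^ η := Real.rpow_pow_comm hx η v

theorem prod_primeFactors_pow_rpow {n : ℕ} (hn : n ≠ 0) (η : ℝ) :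
    ∏ p ∈ n.primeFactors, ((p : ℝ) ^ n.factorization p) ^ η = (n : ℝ) ^ η := by
  rw [Real.finsetProd_rpow _ _ fun _ _ ↦ by positivity]
  congr 1
  exact_mod_cast Nat.prod_factorization_pow_eq_self hn

-- Only the finitely many primes below `2 ^ (1 / η)` contribute a factor exceeding `p ^ (v η)`.
theorem exists_card_divisors_le_mul_rpow {η : ℝ} (hη : 0 < η) :
    ∃ C : ℝ, 0 < C ∧ ∀ n : ℕ, (#n.divisors : ℝ) ≤ C * (n : ℝ) ^ η := by
  set A : ℝ := 1 + 1 / (η * Real.log 2)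
  have hA : 1 ≤ A :=
    le_add_of_nonneg_right (one_div_nonneg.mpr (mul_pos hη (Real.log_pos one_lt_two)).le)
  obtain ⟨P, hP⟩ := exists_nat_ge ((2 : ℝ) ^ (1 / η))
  refine ⟨A ^ P, by positivity, fun n ↦ ?_⟩
  rcases eq_or_ne n 0 with rfl | hn
  · simp [hη.ne']
  have hlocal : ∀ p ∈ n.primeFactors, (n.factorization p : ℝ) + 1 ≤
      (if p < P then A else 1) * ((p : ℝ) ^ n.factorization p) ^ η := by
    intro p hp
    split_ifs with hpP
    · exact natCast_add_one_le_mul_rpow hη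
        (by exact_mod_cast (Nat.prime_of_mem_primeFactors hp).two_le) _
    · rw [one_mul]
      refine natCast_add_one_le_rpow p.cast_nonneg ?_ _
      rw [← Real.rpow_inv_le_iff_of_pos two_pos.le p.cast_nonneg hη, ← one_div]
      exact hP.trans (by exact_mod_cast not_lt.mp hpP)
  have hsmall : ∏ p ∈ n.primeFactors, (if p < P then A else 1) ≤ A ^ P := by
    rw [Finset.prod_ite, Finset.prod_const, Finset.prod_const_one, mul_one]
    refine pow_le_pow_right₀ hA ?_
    calc #{p ∈ n.primeFactors | p < P} ≤ #(Finset.range P) :=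
          Finset.card_le_card fun p hp ↦ Finset.mem_range.mpr (Finset.mem_filter.mp hp).2
      _ = P := Finset.card_range P
  calc (#n.divisors : ℝ) = ∏ p ∈ n.primeFactors, ((n.factorization p : ℝ) + 1) := by
        rw [Nat.card_divisors hn]; push_cast; rfl
    _ ≤ ∏ p ∈ n.primeFactors,
          (if p < P then A else 1) * ((p : ℝ) ^ n.factorization p) ^ η :=
        Finset.prod_le_prod (fun _ _ ↦ by positivity) hlocal
    _ = (∏ p ∈ n.primeFactors, if p < P then A else 1) * (n : ℝ) ^ η := by
        rw [Finset.prod_mul_distrib, prod_primeFactors_pow_rpow hn]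
    _ ≤ A ^ P * (n : ℝ) ^ η := by gcongr

theorem card_le_of_sq_sub_sq_eq {D : ℤ} (hD : D ≠ 0) {S : Finset (ℤ × ℤ)}
    (hS : ∀ t ∈ S, t.1 ^ 2 - t.2 ^ 2 = D) : #S ≤ 2 * #D.natAbs.divisors := by
  have hfactor : ∀ t ∈ S, (t.1 - t.2) * (t.1 + t.2) = D := fun t ht ↦ by
    rw [← hS t ht]; ring
  have hinj : Set.InjOn (fun t : ℤ × ℤ ↦ t.1 - t.2) S := by
    intro t ht t' ht' h
    have hsub : t.1 - t.2 ≠ 0 := left_ne_zero_of_mul ((hfactor t ht).trans_ne hD)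
    have hmul := (hfactor t ht).trans (hfactor t' ht').symm
    simp only at h
    rw [← h] at hmul
    have hadd := mul_left_cancel₀ hsub hmul
    ext <;> linarith
  have hmaps : ∀ t ∈ S, t.1 - t.2 ∈
      D.natAbs.divisors.image ((↑) : ℕ → ℤ) ∪ D.natAbs.divisors.image fun k : ℕ ↦ -(k : ℤ) := by
    intro t ht
    have hdvd : (t.1 - t.2).natAbs ∈ D.natAbs.divisors :=
      Nat.mem_divisors.mpr ⟨Int.natAbs_dvd_natAbs.mpr (Dvd.intro _ (hfactor t ht)), by simpa⟩
    rw [Finset.mem_union, Finset.mem_image, Finset.mem_image]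
    exact (Int.natAbs_eq (t.1 - t.2)).imp (fun h ↦ ⟨_, hdvd, h.symm⟩) fun h ↦ ⟨_, hdvd, h.symm⟩
  calc #S ≤ _ := Finset.card_le_card_of_injOn _ hmaps hinj
    _ ≤ _ := Finset.card_union_le _ _
    _ ≤ #D.natAbs.divisors + #D.natAbs.divisors :=
        add_le_add Finset.card_image_le Finset.card_image_le
    _ = 2 * #D.natAbs.divisors := (two_mul _).symm

theorem card_filter_mul_eq_le_card_divisors (P : Finset (ℕ × ℕ)) {n : ℕ} (hn : n ≠ 0) :
    #{q ∈ P | q.1 * q.2 = n} ≤ #n.divisors := by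
  calc #{q ∈ P | q.1 * q.2 = n} ≤ #n.divisorsAntidiagonal :=
        Finset.card_le_card fun q hq ↦
          Nat.mem_divisorsAntidiagonal.mpr ⟨(Finset.mem_filter.mp hq).2, hn⟩
    _ = #n.divisors := by rw [← Nat.map_div_right_divisors, Finset.card_map]

theorem card_le_mul_card_image_of_fiber_le {α β : Type*} [DecidableEq β] {S : Finset α}
    {f : α → β} {K : ℝ} (hfiber : ∀ b ∈ S.image f, (#{a ∈ S | f a = b} : ℝ) ≤ K) :
    (#S : ℝ) ≤ K * #(S.image f) := by
  rw [Finset.card_eq_sum_card_image f S, Nat.cast_sum, mul_comm, ← nsmul_eq_mul]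
  exact Finset.sum_le_card_nsmul _ _ _ hfiber

theorem card_le_of_dvd_sub_of_abs_sub_le {S : Finset ℤ} {M : ℕ} (hM : 0 < M) {r H : ℝ}
    (hH : 0 ≤ H) (hdvd : ∀ x ∈ S, ∀ y ∈ S, (M : ℤ) ∣ x - y)
    (hclose : ∀ x ∈ S, |(x : ℝ) - r| ≤ H) : (#S : ℝ) ≤ 1 + 2 * H / M := by
  have hMr : (0 : ℝ) < M := by exact_mod_cast hM
  rcases S.eq_empty_or_nonempty with rfl | hne
  · simp only [Finset.card_empty, Nat.cast_zero]; positivity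
  set m := S.min' hne
  have hm : m ∈ S := S.min'_mem hne
  have hsub : S ⊆ (Finset.range (⌊2 * H / M⌋₊ + 1)).image fun k : ℕ ↦ m + M * k := by
    intro x hx
    obtain ⟨k, hk⟩ := hdvd x hx m hm
    have hk0 : 0 ≤ k := by
      refine nonneg_of_mul_nonneg_right ?_ (Int.natCast_pos.mpr hM)
      rw [← hk]
      exact sub_nonneg.mpr (S.min'_le x hx)
    lift k to ℕ using hk0
    refine Finset.mem_image.mpr ⟨k, ?_, by linarith⟩
    rw [Finset.mem_range, Nat.lt_succ_iff, Nat.le_floor_iff (by positivity), le_div_iff₀ hMr]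
    have hkr : (x : ℝ) - m = M * k := by exact_mod_cast hk
    linarith [(abs_le.mp (hclose x hx)).2, (abs_le.mp (hclose m hm)).1]
  calc (#S : ℝ) ≤ (⌊2 * H / M⌋₊ + 1 : ℕ) := by
        exact_mod_cast (Finset.card_le_card hsub).trans
          (Finset.card_image_le.trans (Finset.card_range _).le)
    _ ≤ 1 + 2 * H / M := by
        push_cast
        linarith [Nat.floor_le (show 0 ≤ 2 * H / M by positivity)]

theorem card_le_mul_card_image_of_dvd_sub {α β : Type*} [DecidableEq β] {S : Finset α}
    (f : α → β) (h : α → ℤ) {M : ℕ} (hM : 0 < M) (r : β → ℝ) {H : ℝ} (hH : 0 ≤ H)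
    (hinj : ∀ x ∈ S, ∀ y ∈ S, f x = f y → h x = h y → x = y)
    (hdvd : ∀ x ∈ S, ∀ y ∈ S, f x = f y → (M : ℤ) ∣ h x - h y)
    (hclose : ∀ x ∈ S, |(h x : ℝ) - r (f x)| ≤ H) :
    (#S : ℝ) ≤ (1 + 2 * H / M) * #(S.image f) := by
  refine card_le_mul_card_image_of_fiber_le fun b _ ↦ ?_
  have hcard : #({a ∈ S | f a = b}.image h) = #{a ∈ S | f a = b} :=
    Finset.card_image_of_injOn fun x hx y hy hxy ↦ by
      rw [Finset.mem_coe, Finset.mem_filter] at hx hy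
      exact hinj x hx.1 y hy.1 (hx.2.trans hy.2.symm) hxy
  rw [← hcard]
  refine card_le_of_dvd_sub_of_abs_sub_le hM (r := r b) hH ?_ ?_ <;>
    simp only [Finset.forall_mem_image, Finset.mem_filter, and_imp]
  · exact fun x hx hxb y hy hyb ↦ hdvd x hx y hy (hxb.trans hyb.symm)
  · rintro x hx rfl
    exact hclose x hx

section FixedPointForm

variable {γ : Matrix (Fin 2) (Fin 2) ℤ} {z : ℂ} {δ : ℝ}

/-- The quadratic polynomial `c z² - (a - d) z - b` attached to `γ = !![a, b; c, d]`, whose zeros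
are the fixed points of `γ`. Its size at `z` measures how far `γ` moves `z`. -/
noncomputable def fixedPointForm (γ : Matrix (Fin 2) (Fin 2) ℤ) (z : ℂ) : ℂ :=
  γ 1 0 * z ^ 2 - (γ 0 0 - γ 1 1) * z - γ 0 1

theorem fixedPointForm_re (γ : Matrix (Fin 2) (Fin 2) ℤ) (z : ℂ) :
    (fixedPointForm γ z).re =
      γ 1 0 * (z.re ^ 2 - z.im ^ 2) - (γ 0 0 - γ 1 1) * z.re - γ 0 1 := by
  simp [fixedPointForm, pow_two]

theorem fixedPointForm_im (γ : Matrix (Fin 2) (Fin 2) ℤ) (z : ℂ) :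
    (fixedPointForm γ z).im = z.im * (2 * γ 1 0 * z.re - (γ 0 0 - γ 1 1)) := by
  simp [fixedPointForm, pow_two]
  ring

theorem norm_fixedPointForm_sq (γ : Matrix (Fin 2) (Fin 2) ℤ) (z : ℂ) :
    ‖fixedPointForm γ z‖ ^ 2 = (fixedPointForm γ z).re ^ 2 + (fixedPointForm γ z).im ^ 2 := by
  rw [← Complex.normSq_eq_norm_sq, Complex.normSq_apply, pow_two, pow_two]

theorem denom_ne_zero_of_det_ne_zero (hdet : γ.det ≠ 0) (hz : 0 < z.im) :
    (γ 1 0 : ℂ) * z + γ 1 1 ≠ 0 := by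
  intro h
  have hc : γ 1 0 = 0 := by simpa [hz.ne'] using congrArg Complex.im h
  have hd : γ 1 1 = 0 := by simpa [hc] using h
  exact hdet (by rw [Matrix.det_fin_two, hc, hd]; ring)

theorem moeb_im (γ : Matrix (Fin 2) (Fin 2) ℤ) (z : ℂ) :
    (moeb γ z).im = γ.det * z.im / Complex.normSq (γ 1 0 * z + γ 1 1) := by
  rw [moeb, Complex.div_im, ← sub_div, Matrix.det_fin_two]
  congr 1
  simp
  ring

theorem uInv_moeb (hdet : γ.det ≠ 0) (hz : 0 < z.im) :
    uInv (moeb γ z) z = ‖fixedPointForm γ z‖ ^ 2 / (γ.det * z.im ^ 2) := by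
  have hdenom := denom_ne_zero_of_det_ne_zero hdet hz
  have hnormSq : Complex.normSq (γ 1 0 * z + γ 1 1) ≠ 0 := by simpa using hdenom
  have hdiff : moeb γ z - z = -fixedPointForm γ z / (γ 1 0 * z + γ 1 1) := by
    rw [moeb, fixedPointForm, eq_div_iff hdenom, sub_mul, div_mul_cancel₀ _ hdenom]
    ring
  rw [uInv, hdiff, moeb_im, norm_div, norm_neg, div_pow, ← Complex.normSq_eq_norm_sq (_ + _)]
  field_simp

theorem norm_fixedPointForm_sq_le (hdet : 0 < γ.det) (hz : 0 < z.im)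
    (hu : uInv (moeb γ z) z ≤ δ) : ‖fixedPointForm γ z‖ ^ 2 ≤ δ * γ.det * z.im ^ 2 := by
  have hdet' : (0 : ℝ) < γ.det := by exact_mod_cast hdet
  rw [uInv_moeb hdet.ne' hz, div_le_iff₀ (by positivity)] at hu
  linarith

-- The left side is `|c |z|² + d z - a z̄ - b|²`, so this is the identity expressing `u + 4`.
theorem sq_add_trace_sq_mul_im_sq (γ : Matrix (Fin 2) (Fin 2) ℤ) (z : ℂ) :
    (γ 1 0 * (z.re ^ 2 + z.im ^ 2) - (γ 0 0 - γ 1 1) * z.re - γ 0 1) ^ 2 +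
      (γ.trace : ℝ) ^ 2 * z.im ^ 2 = ‖fixedPointForm γ z‖ ^ 2 + 4 * γ.det * z.im ^ 2 := by
  rw [norm_fixedPointForm_sq, fixedPointForm_re, fixedPointForm_im, Matrix.trace_fin_two,
    Matrix.det_fin_two]
  push_cast
  ring

theorem trace_sq_le_of_uInv_le (hdet : 0 < γ.det) (hz : 0 < z.im)
    (hu : uInv (moeb γ z) z ≤ δ) : (γ.trace : ℝ) ^ 2 ≤ (4 + δ) * γ.det := by
  refine le_of_mul_le_mul_right ?_ (pow_pos hz 2)
  have hid := sq_add_trace_sq_mul_im_sq γ z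
  have hform := norm_fixedPointForm_sq_le hdet hz hu
  have hsq := sq_nonneg (γ 1 0 * (z.re ^ 2 + z.im ^ 2) - (γ 0 0 - γ 1 1) * z.re - γ 0 1)
  linarith

theorem lowerLeft_sq_mul_im_sq_le (hdet : 0 < γ.det) (hz : 0 < z.im)
    (hu : uInv (moeb γ z) z ≤ δ) : ((γ 1 0 : ℝ) * z.im) ^ 2 ≤ (2 + δ) * γ.det := by
  set R : ℝ := γ 1 0 * (z.re ^ 2 + z.im ^ 2) - (γ 0 0 - γ 1 1) * z.re - γ 0 1
  have hR : R ^ 2 ≤ ‖fixedPointForm γ z‖ ^ 2 + 4 * γ.det * z.im ^ 2 :=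
    (le_add_of_nonneg_right (by positivity)).trans_eq (sq_add_trace_sq_mul_im_sq γ z)
  have hre : (fixedPointForm γ z).re ^ 2 ≤ ‖fixedPointForm γ z‖ ^ 2 := by
    rw [norm_fixedPointForm_sq]
    exact le_add_of_nonneg_right (sq_nonneg _)
  have hdiff : 2 * (γ 1 0 : ℝ) * z.im ^ 2 = R - (fixedPointForm γ z).re := by
    rw [fixedPointForm_re]
    ring
  have hform := norm_fixedPointForm_sq_le hdet hz hu
  refine le_of_mul_le_mul_right ?_ (by positivity : 0 < 4 * z.im ^ 2)
  calc ((γ 1 0 : ℝ) * z.im) ^ 2 * (4 * z.im ^ 2) = (R - (fixedPointForm γ z).re) ^ 2 := by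
        rw [← hdiff]; ring
    _ ≤ 2 * R ^ 2 + 2 * (fixedPointForm γ z).re ^ 2 := by
        linarith [sq_nonneg (R + (fixedPointForm γ z).re)]
    _ ≤ (2 + δ) * γ.det * (4 * z.im ^ 2) := by linarith

theorem abs_two_mul_re_sub_diag_le {s n : ℝ} (hz : 0 < z.im)
    (hform : ‖fixedPointForm γ z‖ ≤ s * n * z.im) :
    |2 * (γ 1 0 : ℝ) * z.re - (γ 0 0 - γ 1 1)| ≤ s * n := by
  have him := (Complex.abs_im_le_norm _).trans hform
  rw [fixedPointForm_im, abs_mul, abs_of_pos hz, mul_comm] at him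
  exact le_of_mul_le_mul_right him hz

end FixedPointForm

section ConjDiagonalMod

/-- The lattice of integer matrices `γ` such that `g⁻¹ γ g` is diagonal modulo `L`. -/
def conjDiagonalMod (g : Matrix.SpecialLinearGroup (Fin 2) ℤ) (L : ℕ) :
    AddSubgroup (Matrix (Fin 2) (Fin 2) ℤ) where
  carrier := {γ |
    (L : ℤ) ∣ (((g⁻¹ : Matrix.SpecialLinearGroup (Fin 2) ℤ) : Matrix (Fin 2) (Fin 2) ℤ) * γ *
      (g : Matrix (Fin 2) (Fin 2) ℤ)) 0 1 ∧
    (L : ℤ) ∣ (((g⁻¹ : Matrix.SpecialLinearGroup (Fin 2) ℤ) : Matrix (Fin 2) (Fin 2) ℤ) * γ *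
      (g : Matrix (Fin 2) (Fin 2) ℤ)) 1 0}
  zero_mem' := by simp
  add_mem' h h' := by
    simp only [Set.mem_ofPred_eq, Matrix.mul_add, Matrix.add_mul, Matrix.add_apply]
    exact ⟨dvd_add h.1 h'.1, dvd_add h.2 h'.2⟩
  neg_mem' h := by simpa using h

theorem det_entries_eq_one (g : Matrix.SpecialLinearGroup (Fin 2) ℤ) :
    g 0 0 * g 1 1 - g 0 1 * g 1 0 = 1 := by
  rw [← Matrix.det_fin_two]
  exact g.det_coe

namespace conjDiagonalMod

variable {g : Matrix.SpecialLinearGroup (Fin 2) ℤ} {L : ℕ} {γ : Matrix (Fin 2) (Fin 2) ℤ}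

theorem mem_iff : γ ∈ conjDiagonalMod g L ↔
    (L : ℤ) ∣ (γ 0 0 - γ 1 1) * (g 0 1 * g 1 1) + γ 0 1 * g 1 1 ^ 2 - γ 1 0 * g 0 1 ^ 2 ∧
    (L : ℤ) ∣ γ 1 0 * g 0 0 ^ 2 - (γ 0 0 - γ 1 1) * (g 0 0 * g 1 0) - γ 0 1 * g 1 0 ^ 2 := by
  change (_ ∣ _ ∧ _ ∣ _) ↔ _
  rw [Matrix.SpecialLinearGroup.coe_inv, Matrix.adjugate_fin_two]
  refine iff_of_eq (congrArg₂ _ (congrArg _ ?_) (congrArg _ ?_)) <;>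
    simp [Matrix.mul_apply, Matrix.vecMul, dotProduct] <;> ring

theorem scalar_mem (k : ℤ) : Matrix.scalar (Fin 2) k ∈ conjDiagonalMod g L := by
  rw [mem_iff, Matrix.scalar_apply]
  simp

theorem dvd_upperRight (hγ : γ ∈ conjDiagonalMod g L) (hc : γ 1 0 = 0) (had : γ 0 0 = γ 1 1) :
    (L : ℤ) ∣ γ 0 1 := by
  obtain ⟨h01, h10⟩ := mem_iff.mp hγ
  simp only [hc, had, sub_self, zero_mul, zero_add, sub_zero, zero_sub, dvd_neg] at h01 h10
  have hcop : IsCoprime (g 1 1 ^ 2) (g 1 0 ^ 2) :=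
    IsCoprime.pow ⟨g 0 0, -g 0 1, by linear_combination det_entries_eq_one g⟩
  obtain ⟨u, v, huv⟩ := hcop
  have hcomb := dvd_add (h01.mul_left u) (h10.mul_left v)
  exact hcomb.trans (dvd_of_eq (by linear_combination γ 0 1 * huv))

-- Eliminating `γ 0 1` between the two congruences leaves one relation between `c` and `a - d`.
theorem dvd_lowerLeft_sub_diag (hγ : γ ∈ conjDiagonalMod g L) :
    (L : ℤ) ∣ γ 1 0 * (g 0 0 * g 1 1 + g 0 1 * g 1 0) -
      (γ 0 0 - γ 1 1) * (g 1 0 * g 1 1) := by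
  obtain ⟨h01, h10⟩ := mem_iff.mp hγ
  refine (dvd_add (h01.mul_left (g 1 0 ^ 2)) (h10.mul_left (g 1 1 ^ 2))).trans (dvd_of_eq ?_)
  linear_combination (γ 1 0 * (g 0 0 * g 1 1 + g 0 1 * g 1 0) -
      (γ 0 0 - γ 1 1) * (g 1 0 * g 1 1)) * det_entries_eq_one g

theorem gcd_dvd_lowerLeft (hγ : γ ∈ conjDiagonalMod g L) :
    (Int.gcd L (g 1 0 * g 1 1) : ℤ) ∣ γ 1 0 := by
  have hcop : IsCoprime (g 1 0 * g 1 1) (g 0 0 * g 1 1 + g 0 1 * g 1 0) :=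
    ⟨-4 * g 0 0 * g 0 1, g 0 0 * g 1 1 + g 0 1 * g 1 0, by
      linear_combination (g 0 0 * g 1 1 - g 0 1 * g 1 0 + 1) * det_entries_eq_one g⟩
  have hdvd := (Int.gcd_dvd_left (L : ℤ) (g 1 0 * g 1 1)).trans (dvd_lowerLeft_sub_diag hγ)
  have hdvd' := (dvd_sub_left ((Int.gcd_dvd_right (L : ℤ) (g 1 0 * g 1 1)).mul_left _)).mp hdvd
  exact (hcop.of_isCoprime_of_dvd_left (Int.gcd_dvd_right _ _)).dvd_of_dvd_mul_right hdvd'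

theorem div_gcd_dvd_diag (hL : 0 < L) (hγ : γ ∈ conjDiagonalMod g L) (hc : γ 1 0 = 0) :
    ((L / Int.gcd L (g 1 0 * g 1 1) : ℕ) : ℤ) ∣ γ 0 0 - γ 1 1 := by
  set e := Int.gcd L (g 1 0 * g 1 1)
  have he : 0 < e := Int.gcd_pos_of_ne_zero_left _ (by exact_mod_cast hL.ne')
  have hmul : (L : ℤ) ∣ (γ 0 0 - γ 1 1) * (g 1 0 * g 1 1) := by
    simpa [hc] using dvd_lowerLeft_sub_diag hγ
  have hgcd : (L : ℤ) ∣ (γ 0 0 - γ 1 1) * e := by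
    simpa only [e, Int.coe_gcd] using dvd_mul_gcd_of_dvd_mul hmul
  refine Int.dvd_of_mul_dvd_mul_right (by exact_mod_cast he.ne' : (e : ℤ) ≠ 0) ?_
  rwa [← Nat.cast_mul, Nat.div_mul_cancel (Int.natCast_dvd_natCast.mp (Int.gcd_dvd_left _ _))]

end conjDiagonalMod

end ConjDiagonalMod

section ReducedCount

/-- The shape of `γ - d`, for `d` the lower-right entry of a matrix `γ` of determinant at most `N²`
that is diagonal modulo `L` after conjugation by `g` and moves `z` by at most `s² ≤ 1`. Subtracting
the scalar `d` changes neither `fixedPointForm` nor membership in `conjDiagonalMod`. -/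
structure IsReducedClose (z : ℂ) (g : Matrix.SpecialLinearGroup (Fin 2) ℤ) (L : ℕ) (s N : ℝ)
    (γ : Matrix (Fin 2) (Fin 2) ℤ) : Prop where
  lowerRight_eq_zero : γ 1 1 = 0
  mem_conjDiagonalMod : γ ∈ conjDiagonalMod g L
  abs_lowerLeft_le : |(γ 1 0 : ℝ)| ≤ 2 * N / z.im
  norm_form_le : ‖fixedPointForm γ z‖ ≤ s * N * z.im

variable {z : ℂ} {g : Matrix.SpecialLinearGroup (Fin 2) ℤ} {L : ℕ} {s N : ℝ}
  {S : Finset (Matrix (Fin 2) (Fin 2) ℤ)}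

theorem card_le_mul_card_image_lowerLeft_upperLeft (hL : 0 < L) (hB : 0 ≤ s * N * z.im)
    (hS : ∀ γ ∈ S, IsReducedClose z g L s N γ) :
    (#S : ℝ) ≤ (1 + 2 * (s * N * z.im) / L) * #(S.image fun γ ↦ (γ 1 0, γ 0 0)) := by
  refine card_le_mul_card_image_of_dvd_sub
    (fun γ : Matrix (Fin 2) (Fin 2) ℤ ↦ (γ 1 0, γ 0 0)) (fun γ ↦ γ 0 1) hL
    (fun t ↦ t.1 * (z.re ^ 2 - z.im ^ 2) - t.2 * z.re) hB ?_ ?_ ?_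
  · intro γ hγ γ' hγ' hdiag hb
    obtain ⟨hc, ha⟩ := Prod.ext_iff.mp hdiag
    have hd := (hS γ hγ).lowerRight_eq_zero.trans (hS γ' hγ').lowerRight_eq_zero.symm
    ext i j
    fin_cases i <;> fin_cases j
    exacts [ha, hb, hc, hd]
  · intro γ hγ γ' hγ' hdiag
    obtain ⟨hc, ha⟩ := Prod.ext_iff.mp hdiag
    refine conjDiagonalMod.dvd_upperRight
      (sub_mem (hS γ hγ).mem_conjDiagonalMod (hS γ' hγ').mem_conjDiagonalMod)
      (sub_eq_zero.mpr hc) ?_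
    rw [Matrix.sub_apply, Matrix.sub_apply, (hS γ hγ).lowerRight_eq_zero,
      (hS γ' hγ').lowerRight_eq_zero, sub_self]
    exact sub_eq_zero.mpr ha
  · intro γ hγ
    have hre := (Complex.abs_re_le_norm _).trans (hS γ hγ).norm_form_le
    rwa [fixedPointForm_re, (hS γ hγ).lowerRight_eq_zero, Int.cast_zero, sub_zero,
      abs_sub_comm] at hre

theorem card_image_lowerLeft_upperLeft_le (hL : 0 < L) (hz : 0 < z.im) (hB : 0 ≤ s * N)
    (hS : ∀ γ ∈ S, IsReducedClose z g L s N γ) :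
    (#(S.image fun γ ↦ (γ 1 0, γ 0 0)) : ℝ) ≤
      (1 + 2 * (s * N) / (L / Int.gcd L (g 1 0 * g 1 1) : ℕ)) * #(S.image fun γ ↦ γ 1 0) := by
  have hquot : 0 < L / Int.gcd L (g 1 0 * g 1 1) :=
    Nat.div_pos (Nat.le_of_dvd hL (Int.natCast_dvd_natCast.mp (Int.gcd_dvd_left _ _)))
      (Int.gcd_pos_of_ne_zero_left _ (by exact_mod_cast hL.ne'))
  have hcount := card_le_mul_card_image_of_dvd_sub (S := S.image fun γ ↦ (γ 1 0, γ 0 0))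
    Prod.fst Prod.snd hquot (fun c ↦ 2 * c * z.re) hB
    (fun t _ t' _ h h' ↦ Prod.ext h h') ?_ ?_
  · rwa [Finset.image_image] at hcount
  · simp only [Finset.forall_mem_image]
    intro γ hγ γ' hγ' hc
    have hdvd := conjDiagonalMod.div_gcd_dvd_diag hL
      (sub_mem (hS γ hγ).mem_conjDiagonalMod (hS γ' hγ').mem_conjDiagonalMod)
      (sub_eq_zero.mpr hc)
    simpa [(hS γ hγ).lowerRight_eq_zero, (hS γ' hγ').lowerRight_eq_zero] using hdvd
  · simp only [Finset.forall_mem_image]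
    intro γ hγ
    have him := abs_two_mul_re_sub_diag_le hz (hS γ hγ).norm_form_le
    rwa [(hS γ hγ).lowerRight_eq_zero, Int.cast_zero, sub_zero, abs_sub_comm] at him

theorem card_image_lowerLeft_le (hL : 0 < L) (hB : 0 ≤ 2 * N / z.im)
    (hS : ∀ γ ∈ S, IsReducedClose z g L s N γ) :
    (#(S.image fun γ ↦ γ 1 0) : ℝ) ≤
      1 + 2 * (2 * N / z.im) / Int.gcd L (g 1 0 * g 1 1) := by
  refine card_le_of_dvd_sub_of_abs_sub_le (r := 0)
    (Int.gcd_pos_of_ne_zero_left _ (by exact_mod_cast hL.ne')) hB ?_ ?_ <;>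
    simp only [Finset.forall_mem_image, sub_zero]
  · exact fun γ hγ γ' hγ' ↦
      dvd_sub (conjDiagonalMod.gcd_dvd_lowerLeft (hS γ hγ).mem_conjDiagonalMod)
        (conjDiagonalMod.gcd_dvd_lowerLeft (hS γ' hγ').mem_conjDiagonalMod)
  · exact fun γ hγ ↦ (hS γ hγ).abs_lowerLeft_le

theorem box_product_le {s N y e k : ℝ} (hs₀ : 0 ≤ s) (hs₁ : s ≤ 1) (hN : 1 ≤ N) (hy : 1 ≤ y)
    (he : 1 ≤ e) (hk : 1 ≤ k) :
    (1 + 2 * (s * N * y) / (e * k)) * ((1 + 2 * (s * N) / k) * (1 + 2 * (2 * N / y) / e)) ≤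
      22 * N * (1 + s * N * y / (e * k) + s ^ 2 * N ^ 2 / (e * k)) := by
  set T := s * N * y / (e * k) with hT
  set U := s * N / k with hU
  set V := N / (y * e) with hV
  set W := s ^ 2 * N ^ 2 / (e * k) with hW
  have hT₀ : 0 ≤ T := by positivity
  have hUN : U ≤ N :=
    (div_le_self (by positivity) hk).trans (mul_le_of_le_one_left (by linarith) hs₁)
  have hVN : V ≤ N := div_le_self (by linarith) (one_le_mul_of_one_le_of_one_le hy he)
  have hUV : U * V ≤ N * T := by
    have hfactor : U * V * y ^ 2 = N * T := by rw [hT, hU, hV]; field_simp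
    rw [← hfactor]
    exact le_mul_of_one_le_right (by positivity) (one_le_pow₀ hy)
  have hTUV : T * (U * V) ≤ N * W := by
    have hfactor : T * (U * V) * (e * k) = N * W := by rw [hT, hU, hV, hW]; field_simp
    rw [← hfactor]
    exact le_mul_of_one_le_right (by positivity) (one_le_mul_of_one_le_of_one_le he hk)
  have hTN : T ≤ T * N := le_mul_of_one_le_right hT₀ hN
  have hTU : T * U ≤ T * N := by gcongr
  have hTV : T * V ≤ T * N := by gcongr
  have hNW : 0 ≤ N * W := by positivity
  calc (1 + 2 * (s * N * y) / (e * k)) * ((1 + 2 * (s * N) / k) * (1 + 2 * (2 * N / y) / e))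
      = (1 + 2 * T) * ((1 + 2 * U) * (1 + 4 * V)) := by rw [hT, hU, hV]; field_simp; ring
    _ = 1 + 2 * U + 4 * V + 2 * T + 4 * (T * U) + 8 * (T * V) + 8 * (U * V) +
          16 * (T * (U * V)) := by ring
    _ ≤ 22 * N * (1 + T + W) := by linarith

theorem card_le_of_isReducedClose (hL : 0 < L) (hz : 1 ≤ z.im) (hN : 1 ≤ N) (hs₀ : 0 ≤ s)
    (hs₁ : s ≤ 1) (hS : ∀ γ ∈ S, IsReducedClose z g L s N γ) :
    (#S : ℝ) ≤ 22 * N * (1 + s * N * z.im / L + s ^ 2 * N ^ 2 / L) := by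
  set e := Int.gcd L (g 1 0 * g 1 1)
  set k := L / e
  have heL : e ∣ L := Int.natCast_dvd_natCast.mp (Int.gcd_dvd_left _ _)
  have he : 0 < e := Nat.pos_of_dvd_of_pos heL hL
  have hk : 0 < k := Nat.div_pos (Nat.le_of_dvd hL heL) he
  have hek : (L : ℝ) = e * k := by exact_mod_cast (Nat.mul_div_cancel' heL).symm
  calc (#S : ℝ)
      ≤ (1 + 2 * (s * N * z.im) / L) * #(S.image fun γ ↦ (γ 1 0, γ 0 0)) :=
        card_le_mul_card_image_lowerLeft_upperLeft hL (by positivity) hS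
    _ ≤ (1 + 2 * (s * N * z.im) / L) * ((1 + 2 * (s * N) / k) * #(S.image fun γ ↦ γ 1 0)) := by
        gcongr
        exact card_image_lowerLeft_upperLeft_le hL (by linarith) (by positivity) hS
    _ ≤ (1 + 2 * (s * N * z.im) / L) *
          ((1 + 2 * (s * N) / k) * (1 + 2 * (2 * N / z.im) / e)) := by
        gcongr
        exact card_image_lowerLeft_le hL (by positivity) hS
    _ ≤ 22 * N * (1 + s * N * z.im / L + s ^ 2 * N ^ 2 / L) := by
        rw [hek]
        exact box_product_le hs₀ hs₁ hN hz (by exact_mod_cast he) (by exact_mod_cast hk)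

end ReducedCount

section CloseMatrices

open Matrix (scalar)

theorem fixedPointForm_sub_scalar (γ : Matrix (Fin 2) (Fin 2) ℤ) (k : ℤ) (z : ℂ) :
    fixedPointForm (γ - scalar (Fin 2) k) z = fixedPointForm γ z := by
  rw [Matrix.scalar_apply]
  simp [fixedPointForm]

theorem discr_sub_scalar (γ : Matrix (Fin 2) (Fin 2) ℤ) (k : ℤ) :
    (γ - scalar (Fin 2) k).discr = γ.discr := by
  rw [Matrix.scalar_apply]
  simp only [Matrix.discr_fin_two, Matrix.trace_fin_two, Matrix.det_fin_two, Matrix.sub_apply,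
    Matrix.diagonal_apply_eq, Matrix.diagonal_apply_ne _ zero_ne_one,
    Matrix.diagonal_apply_ne _ one_ne_zero]
  ring

/-- The set of matrices counted by `Mcount z g δ L m`. -/
def closeMatrices (z : ℂ) (g : Matrix.SpecialLinearGroup (Fin 2) ℤ) (δ : ℝ) (L m : ℕ) :
    Set (Matrix (Fin 2) (Fin 2) ℤ) :=
  {γ | γ.det = m ∧ uInv (moeb γ z) z ≤ δ ∧ γ ∈ conjDiagonalMod g L}

/-- The matrices in `closeMatrices z g δ L m` that are upper triangular with a double eigenvalue,
that is, scalar or parabolic with fixed point `∞`. -/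
def closeUpperParabolic (z : ℂ) (g : Matrix.SpecialLinearGroup (Fin 2) ℤ) (δ : ℝ) (L m : ℕ) :
    Set (Matrix (Fin 2) (Fin 2) ℤ) :=
  {γ ∈ closeMatrices z g δ L m | γ.discr = 0 ∧ γ 1 0 = 0}

/-- The matrices in `closeMatrices z g δ L m` with two distinct eigenvalues. -/
def closeNonparabolic (z : ℂ) (g : Matrix.SpecialLinearGroup (Fin 2) ℤ) (δ : ℝ) (L m : ℕ) :
    Set (Matrix (Fin 2) (Fin 2) ℤ) :=
  {γ ∈ closeMatrices z g δ L m | γ.discr ≠ 0}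

variable {z : ℂ} {g : Matrix.SpecialLinearGroup (Fin 2) ℤ} {δ : ℝ} {L m n : ℕ}
  {γ : Matrix (Fin 2) (Fin 2) ℤ}

theorem norm_fixedPointForm_le_of_mem_closeMatrices (hn : 0 < n) (hz : 0 < z.im)
    (hγ : γ ∈ closeMatrices z g δ L (n ^ 2)) : ‖fixedPointForm γ z‖ ≤ √δ * n * z.im := by
  have hdet : (γ.det : ℝ) = n ^ 2 := by exact_mod_cast hγ.1
  have hsq := norm_fixedPointForm_sq_le (hγ.1 ▸ by positivity) hz hγ.2.1
  rw [hdet, mul_assoc, ← mul_pow] at hsq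
  rw [mul_assoc, ← Real.sqrt_sq (by positivity : 0 ≤ n * z.im), ← Real.sqrt_mul' _ (sq_nonneg _)]
  exact Real.le_sqrt_of_sq_le hsq

theorem abs_lowerLeft_le_of_mem_closeMatrices (hn : 0 < n) (hz : 0 < z.im) (hδ : δ ≤ 1)
    (hγ : γ ∈ closeMatrices z g δ L (n ^ 2)) : |(γ 1 0 : ℝ)| ≤ 2 * n / z.im := by
  have hdet : (γ.det : ℝ) = n ^ 2 := by exact_mod_cast hγ.1
  have hsq := lowerLeft_sq_mul_im_sq_le (hγ.1 ▸ by positivity) hz hγ.2.1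
  rw [hdet] at hsq
  have habs : |(γ 1 0 : ℝ) * z.im| ≤ 2 * n :=
    abs_le_of_sq_le_sq (by nlinarith [sq_nonneg (n : ℝ)]) (by positivity)
  rwa [abs_mul, abs_of_pos hz, ← le_div_iff₀ hz] at habs

theorem discr_natAbs_le_of_mem_closeMatrices (hn : 0 < n) (hz : 0 < z.im) (hδ : δ ≤ 1)
    (hγ : γ ∈ closeMatrices z g δ L (n ^ 2)) : (γ.discr.natAbs : ℝ) ≤ 4 * n ^ 2 := by
  have hdet : (γ.det : ℝ) = n ^ 2 := by exact_mod_cast hγ.1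
  have htrace := trace_sq_le_of_uInv_le (hγ.1 ▸ by positivity) hz hγ.2.1
  rw [hdet] at htrace
  rw [Nat.cast_natAbs, Int.cast_abs, Matrix.discr_fin_two, Int.cast_sub, Int.cast_mul,
    Int.cast_pow, hdet, Int.cast_ofNat, abs_le]
  constructor <;> nlinarith [sq_nonneg (γ.trace : ℝ), sq_nonneg (n : ℝ)]

theorem isReducedClose_sub_scalar {N : ℝ} (hn : 0 < n) (hnN : n ≤ N) (hz : 0 < z.im)
    (hδ : δ ≤ 1) (hγ : γ ∈ closeMatrices z g δ L (n ^ 2)) :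
    IsReducedClose z g L √δ N (γ - scalar (Fin 2) (γ 1 1)) where
  lowerRight_eq_zero := by
    rw [Matrix.scalar_apply, Matrix.sub_apply, Matrix.diagonal_apply_eq, sub_self]
  mem_conjDiagonalMod := sub_mem hγ.2.2 (conjDiagonalMod.scalar_mem _)
  abs_lowerLeft_le := by
    rw [Matrix.scalar_apply, Matrix.sub_apply, Matrix.diagonal_apply_ne _ one_ne_zero, sub_zero]
    exact (abs_lowerLeft_le_of_mem_closeMatrices hn hz hδ hγ).trans (by gcongr)
  norm_form_le := by
    rw [fixedPointForm_sub_scalar]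
    exact (norm_fixedPointForm_le_of_mem_closeMatrices hn hz hγ).trans (by gcongr)

theorem finite_setOf_forall_abs_entry_le (B : ℝ) :
    {γ : Matrix (Fin 2) (Fin 2) ℤ | ∀ i j, |(γ i j : ℝ)| ≤ B}.Finite := by
  have hint : {k : ℤ | |(k : ℝ)| ≤ B}.Finite := by
    refine (Set.finite_Icc (-⌊B⌋) ⌊B⌋).subset fun k hk ↦ ?_
    rw [Set.mem_Icc, ← abs_le, Int.le_floor, Int.cast_abs]
    exact hk
  exact Set.Finite.pi' fun _ ↦ Set.Finite.pi' fun _ ↦ hint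

theorem finite_setOf_trace_lowerLeft_fixedPointForm_le (hz : 0 < z.im)
    (K : ℝ) : {γ : Matrix (Fin 2) (Fin 2) ℤ |
      |(γ.trace : ℝ)| ≤ K ∧ |(γ 1 0 : ℝ)| ≤ K ∧ ‖fixedPointForm γ z‖ ≤ K}.Finite := by
  set D : ℝ := K / z.im + 2 * K * |z.re|
  refine (finite_setOf_forall_abs_entry_le
    (K + D + K * |z.re ^ 2 - z.im ^ 2| + D * |z.re|)).subset ?_
  rintro γ ⟨htrace, hc, hform⟩
  have hK : 0 ≤ K := (norm_nonneg _).trans hform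
  have hdiag : |(γ 0 0 : ℝ) - γ 1 1| ≤ D := by
    have him := abs_two_mul_re_sub_diag_le (s := 1) (n := K / z.im) hz
      (hform.trans_eq (by field_simp))
    have hcre : |2 * (γ 1 0 : ℝ) * z.re| ≤ 2 * K * |z.re| := by
      rw [abs_mul, abs_mul, abs_two]; gcongr
    rw [abs_le] at him hcre ⊢
    constructor <;> linarith
  have hb : |(γ 0 1 : ℝ)| ≤ K * |z.re ^ 2 - z.im ^ 2| + D * |z.re| + K := by
    have hre := (Complex.abs_re_le_norm _).trans hform
    have hcsq : |(γ 1 0 : ℝ) * (z.re ^ 2 - z.im ^ 2)| ≤ K * |z.re ^ 2 - z.im ^ 2| := by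
      rw [abs_mul]; gcongr
    have hdre : |((γ 0 0 : ℝ) - γ 1 1) * z.re| ≤ D * |z.re| := by
      rw [abs_mul]; gcongr
    rw [fixedPointForm_re, abs_le] at hre
    rw [abs_le] at hcsq hdre ⊢
    constructor <;> linarith
  have hD₀ : 0 ≤ D := by positivity
  have hsq₀ : 0 ≤ K * |z.re ^ 2 - z.im ^ 2| := by positivity
  have hre₀ : 0 ≤ D * |z.re| := by positivity
  rw [Matrix.trace_fin_two, Int.cast_add] at htrace
  intro i j
  rw [abs_le] at *
  fin_cases i <;> fin_cases j <;> constructor <;> dsimp only [Fin.zero_eta, Fin.mk_one] <;> linarith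

theorem closeMatrices_finite (hz : 0 < z.im) (hm : 0 < m) : (closeMatrices z g δ L m).Finite := by
  set K : ℝ := √((4 + δ) * m) + √((2 + δ) * m) / z.im + √(δ * m * z.im ^ 2)
  refine (finite_setOf_trace_lowerLeft_fixedPointForm_le hz K).subset ?_
  rintro γ ⟨hdet, hu, -⟩
  have hdet_pos : 0 < γ.det := hdet ▸ by exact_mod_cast hm
  have hdet_cast : (γ.det : ℝ) = m := by exact_mod_cast hdet
  have htrace := Real.abs_le_sqrt (trace_sq_le_of_uInv_le hdet_pos hz hu)
  have hc := Real.abs_le_sqrt (lowerLeft_sq_mul_im_sq_le hdet_pos hz hu)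
  have hform := Real.le_sqrt_of_sq_le (norm_fixedPointForm_sq_le hdet_pos hz hu)
  rw [abs_mul, abs_of_pos hz, ← le_div_iff₀ hz] at hc
  rw [hdet_cast] at htrace hc hform
  have htrace₀ := Real.sqrt_nonneg ((4 + δ) * m)
  have hc₀ : 0 ≤ √((2 + δ) * m) / z.im := by positivity
  have hform₀ := Real.sqrt_nonneg (δ * m * z.im ^ 2)
  exact ⟨by linarith, by linarith, by linarith⟩

theorem closeUpperParabolic_finite (hz : 0 < z.im) (hm : 0 < m) :
    (closeUpperParabolic z g δ L m).Finite :=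
  (closeMatrices_finite hz hm).subset (Set.sep_subset _ _)

theorem closeNonparabolic_finite (hz : 0 < z.im) (hm : 0 < m) :
    (closeNonparabolic z g δ L m).Finite :=
  (closeMatrices_finite hz hm).subset (Set.sep_subset _ _)

theorem Mstar_le_ncard_add_ncard (hz : 0 < z.im) (hm : 0 < m) :
    Mstar z g δ L m ≤
      (closeUpperParabolic z g δ L m).ncard + (closeNonparabolic z g δ L m).ncard := by
  have hfin := closeMatrices_finite (g := g) (δ := δ) (L := L) hz hm
  have hpar : {γ ∈ closeMatrices z g δ L m | γ.trace ^ 2 = 4 * (m : ℤ) ∧ γ 1 0 ≠ 0} ⊆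
      closeMatrices z g δ L m := Set.sep_subset _ _
  have hMpar : Mpar z g δ L m =
      {γ ∈ closeMatrices z g δ L m | γ.trace ^ 2 = 4 * (m : ℤ) ∧ γ 1 0 ≠ 0}.ncard := by
    rw [Mpar]
    congr 1
    ext γ
    exact (and_assoc.trans (and_congr_right fun _ ↦ and_assoc)).symm
  rw [Mstar, hMpar, show Mcount z g δ L m = (closeMatrices z g δ L m).ncard from rfl,
    ← Set.ncard_sdiff hpar (hfin.subset hpar)]
  refine (Set.ncard_le_ncard ?_ ((closeUpperParabolic_finite hz hm).union
    (closeNonparabolic_finite hz hm))).trans (Set.ncard_union_le _ _)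
  rintro γ ⟨hγ, hnot⟩
  have hdiscr : γ.discr = γ.trace ^ 2 - 4 * (m : ℤ) := by rw [Matrix.discr_fin_two, hγ.1]
  by_cases hzero : γ.discr = 0
  · refine .inl ⟨hγ, hzero, ?_⟩
    by_contra hc
    exact hnot ⟨hγ, sub_eq_zero.mp (hdiscr ▸ hzero), hc⟩
  · exact .inr ⟨hγ, hzero⟩

theorem upperLeft_eq_lowerRight_of_mem_closeUpperParabolic
    (hγ : γ ∈ closeUpperParabolic z g δ L m) : γ 0 0 = γ 1 1 := by
  obtain ⟨-, hdiscr, hc⟩ := hγ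
  rw [Matrix.discr_fin_two, Matrix.trace_fin_two, Matrix.det_fin_two, hc] at hdiscr
  exact sub_eq_zero.mp (pow_eq_zero_iff two_ne_zero |>.mp (by linear_combination hdiscr))

theorem upperLeft_eq_or_eq_neg_of_mem_closeUpperParabolic
    (hγ : γ ∈ closeUpperParabolic z g δ L (n ^ 2)) : γ 0 0 = n ∨ γ 0 0 = -n := by
  have hdet := hγ.1.1
  rw [Matrix.det_fin_two, hγ.2.2, ← upperLeft_eq_lowerRight_of_mem_closeUpperParabolic hγ,
    Nat.cast_pow] at hdet
  exact sq_eq_sq_iff_eq_or_eq_neg.mp (by linear_combination hdet)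

theorem ncard_closeUpperParabolic_le (hn : 0 < n) (hL : 0 < L) (hz : 0 < z.im) :
    ((closeUpperParabolic z g δ L (n ^ 2)).ncard : ℝ) ≤ 2 * (1 + 2 * (√δ * n * z.im) / L) := by
  obtain ⟨S, hS⟩ := (closeUpperParabolic_finite (g := g) (δ := δ) (L := L) hz
    (pow_pos hn 2)).exists_finset_coe
  have hmem : ∀ γ ∈ S, γ ∈ closeUpperParabolic z g δ L (n ^ 2) := fun γ hγ ↦ hS.subset hγ
  have hdiag : ∀ γ ∈ S, γ 0 0 = γ 1 1 := fun γ hγ ↦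
    upperLeft_eq_lowerRight_of_mem_closeUpperParabolic (hmem γ hγ)
  have hdvd : ∀ γ ∈ S, (L : ℤ) ∣ γ 0 1 := fun γ hγ ↦
    conjDiagonalMod.dvd_upperRight (hmem γ hγ).1.2.2 (hmem γ hγ).2.2 (hdiag γ hγ)
  have hcard := card_le_mul_card_image_of_dvd_sub (S := S) (fun γ ↦ γ 0 0) (fun γ ↦ γ 0 1) hL
    (fun _ ↦ 0) (by positivity : 0 ≤ √δ * n * z.im) ?_
    (fun γ hγ γ' hγ' _ ↦ dvd_sub (hdvd γ hγ) (hdvd γ' hγ')) ?_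
  · have himage : S.image (fun γ ↦ γ 0 0) ⊆ {(n : ℤ), -(n : ℤ)} := by
      refine Finset.image_subset_iff.mpr fun γ hγ ↦ ?_
      rw [Finset.mem_insert, Finset.mem_singleton]
      exact upperLeft_eq_or_eq_neg_of_mem_closeUpperParabolic (hmem γ hγ)
    have htwo : (#(S.image fun γ ↦ γ 0 0) : ℝ) ≤ 2 := by
      exact_mod_cast (Finset.card_le_card himage).trans Finset.card_le_two
    rw [← hS, Set.ncard_coe_finset, mul_comm 2]
    exact hcard.trans (by gcongr)
  · intro γ hγ γ' hγ' ha hb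
    ext i j
    fin_cases i <;> fin_cases j
    exacts [ha, hb, (hmem γ hγ).2.2.trans (hmem γ' hγ').2.2.symm,
      (hdiag γ hγ).symm.trans (ha.trans (hdiag γ' hγ'))]
  · intro γ hγ
    have hform := norm_fixedPointForm_le_of_mem_closeMatrices hn hz (hmem γ hγ).1
    rwa [fixedPointForm, (hmem γ hγ).2.2, hdiag γ hγ, Int.cast_zero, zero_mul, sub_self, zero_mul,
      sub_zero, zero_sub, norm_neg, Complex.norm_intCast, ← sub_zero ((γ 0 1 : ℤ) : ℝ)] at hform

end CloseMatrices

section SquareDeterminants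

open Matrix (scalar)

-- `(tr γ)² - (2n)² = discr A` is fixed, and `tr γ` determines the scalar `γ - A`.
theorem card_le_of_sub_scalar_eq {A : Matrix (Fin 2) (Fin 2) ℤ} (hA : A.discr ≠ 0)
    {F : Finset (Σ _ : ℕ, Matrix (Fin 2) (Fin 2) ℤ)}
    (hdet : ∀ t ∈ F, t.2.det = (t.1 : ℤ) ^ 2)
    (hsub : ∀ t ∈ F, t.2 - scalar (Fin 2) (t.2 1 1) = A) :
    #F ≤ 2 * #A.discr.natAbs.divisors := by
  have heq : ∀ t ∈ F, t.2 = A + scalar (Fin 2) (t.2 1 1) :=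
    fun t ht ↦ sub_eq_iff_eq_add.mp (hsub t ht)
  have htrace : ∀ t ∈ F, t.2.trace = A.trace + 2 * t.2 1 1 := fun t ht ↦ by
    nth_rw 1 [heq t ht]
    rw [Matrix.trace_add, Matrix.scalar_apply, Matrix.trace_diagonal, Fin.sum_const, nsmul_eq_mul,
      Nat.cast_ofNat]
  have hinj : Set.InjOn (fun t : Σ _ : ℕ, Matrix (Fin 2) (Fin 2) ℤ ↦ (t.2.trace, 2 * (t.1 : ℤ)))
      F := by
    intro t ht t' ht' h
    obtain ⟨htr, hfst⟩ := Prod.ext_iff.mp h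
    simp only [htrace t ht, htrace t' ht'] at htr hfst
    refine Sigma.ext (by omega) (heq_of_eq ?_)
    rw [heq t ht, heq t' ht', show t.2 1 1 = t'.2 1 1 by omega]
  rw [← Finset.card_image_of_injOn hinj]
  refine card_le_of_sq_sub_sq_eq hA (Finset.forall_mem_image.mpr fun t ht ↦ ?_)
  rw [← hsub t ht, discr_sub_scalar, Matrix.discr_fin_two, hdet t ht]
  ring

variable {z : ℂ} {g : Matrix.SpecialLinearGroup (Fin 2) ℤ} {δ N τ : ℝ} {L : ℕ}

theorem sum_card_closeNonparabolic_le (hL : 0 < L) (hz : 1 ≤ z.im) (hδ₀ : 0 ≤ δ) (hδ₁ : δ ≤ 1)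
    (hN : 1 ≤ N) (hτ : ∀ k : ℕ, (k : ℝ) ≤ 4 * N ^ 2 → #k.divisors ≤ τ) {I : Finset ℕ}
    (hI : ∀ n ∈ I, 0 < n ∧ (n : ℝ) ≤ N) {F : ℕ → Finset (Matrix (Fin 2) (Fin 2) ℤ)}
    (hF : ∀ n ∈ I, ∀ γ ∈ F n, γ ∈ closeNonparabolic z g δ L (n ^ 2)) :
    (∑ n ∈ I, #(F n) : ℝ) ≤
      2 * τ * (22 * N * (1 + √δ * N * z.im / L + δ * N ^ 2 / L)) := by
  have hz₀ : 0 < z.im := by linarith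
  have hτ₀ : 0 ≤ τ := by simpa using hτ 0 (by push_cast; positivity)
  set reduce : (Σ _ : ℕ, Matrix (Fin 2) (Fin 2) ℤ) → Matrix (Fin 2) (Fin 2) ℤ :=
    fun t ↦ t.2 - scalar (Fin 2) (t.2 1 1)
  have hmem : ∀ t ∈ I.sigma F, t.1 ∈ I ∧ t.2 ∈ closeNonparabolic z g δ L (t.1 ^ 2) :=
    fun t ht ↦ (Finset.mem_sigma.mp ht).imp_right (hF _ (Finset.mem_sigma.mp ht).1 _)
  have hfiber : ∀ A ∈ (I.sigma F).image reduce,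
      (#{t ∈ I.sigma F | reduce t = A} : ℝ) ≤ 2 * τ := by
    simp only [Finset.forall_mem_image]
    intro t ht
    obtain ⟨htI, htclose, htdiscr⟩ := hmem t ht
    have hdiscr : (reduce t).discr = t.2.discr := discr_sub_scalar _ _
    have hcard := card_le_of_sub_scalar_eq (hdiscr.trans_ne htdiscr)
      (F := {t' ∈ I.sigma F | reduce t' = reduce t})
      (fun t' ht' ↦ by exact_mod_cast (hmem t' (Finset.mem_filter.mp ht').1).2.1.1)
      (fun t' ht' ↦ (Finset.mem_filter.mp ht').2)
    have hdivisors : (#(reduce t).discr.natAbs.divisors : ℝ) ≤ τ := by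
      rw [hdiscr]
      obtain ⟨hpos, hle⟩ := hI _ htI
      exact hτ _ ((discr_natAbs_le_of_mem_closeMatrices hpos hz₀ hδ₁ htclose).trans (by gcongr))
    exact (Nat.cast_le.mpr hcard).trans (by push_cast; gcongr)
  have hreduced : (#((I.sigma F).image reduce) : ℝ) ≤
      22 * N * (1 + √δ * N * z.im / L + √δ ^ 2 * N ^ 2 / L) := by
    refine card_le_of_isReducedClose (g := g) hL hz hN (Real.sqrt_nonneg δ)
      (Real.sqrt_le_one.mpr hδ₁) (Finset.forall_mem_image.mpr fun t ht ↦ ?_)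
    obtain ⟨htI, htclose, -⟩ := hmem t ht
    exact isReducedClose_sub_scalar (hI _ htI).1 (hI _ htI).2 hz₀ hδ₁ htclose
  rw [Real.sq_sqrt hδ₀] at hreduced
  calc (∑ n ∈ I, #(F n) : ℝ) = #(I.sigma F) := by rw [Finset.card_sigma, Nat.cast_sum]
    _ ≤ 2 * τ * #((I.sigma F).image reduce) := card_le_mul_card_image_of_fiber_le hfiber
    _ ≤ _ := by gcongr

theorem sum_ncard_closeNonparabolic_le (hL : 0 < L) (hz : 1 ≤ z.im) (hδ₀ : 0 ≤ δ) (hδ₁ : δ ≤ 1)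
    (hN : 1 ≤ N) (hτ : ∀ k : ℕ, (k : ℝ) ≤ 4 * N ^ 2 → #k.divisors ≤ τ) {I : Finset ℕ}
    (hI : ∀ n ∈ I, 0 < n ∧ (n : ℝ) ≤ N) :
    (∑ n ∈ I, (closeNonparabolic z g δ L (n ^ 2)).ncard : ℝ) ≤
      2 * τ * (22 * N * (1 + √δ * N * z.im / L + δ * N ^ 2 / L)) := by
  have hfinset : ∀ n ∈ I, ∃ F : Finset (Matrix (Fin 2) (Fin 2) ℤ),
      (F : Set (Matrix (Fin 2) (Fin 2) ℤ)) = closeNonparabolic z g δ L (n ^ 2) := fun n hn ↦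
    (closeNonparabolic_finite (by linarith) (pow_pos (hI n hn).1 2)).exists_finset_coe
  choose! F hF using hfinset
  refine (Finset.sum_congr rfl fun n hn ↦ ?_).trans_le
    (sum_card_closeNonparabolic_le hL hz hδ₀ hδ₁ hN hτ hI fun n hn γ hγ ↦ (hF n hn).subset hγ)
  rw [← hF n hn, Set.ncard_coe_finset]

theorem sum_comp_mul_le_mul_sum_image {P : Finset (ℕ × ℕ)} {f : ℕ → ℝ} (hf : ∀ n, 0 ≤ f n)
    (hP : ∀ q ∈ P, q.1 * q.2 ≠ 0 ∧ #(q.1 * q.2).divisors ≤ τ) :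
    ∑ q ∈ P, f (q.1 * q.2) ≤ τ * ∑ n ∈ P.image (fun q ↦ q.1 * q.2), f n := by
  rw [Finset.sum_comp f fun q : ℕ × ℕ ↦ q.1 * q.2, Finset.mul_sum]
  refine Finset.sum_le_sum (Finset.forall_mem_image.mpr fun q hq ↦ ?_)
  obtain ⟨hne, hle⟩ := hP q hq
  rw [nsmul_eq_mul]
  refine mul_le_mul_of_nonneg_right (le_trans ?_ hle) (hf _)
  exact_mod_cast card_filter_mul_eq_le_card_divisors P hne

variable {P : Finset (ℕ × ℕ)}

theorem sum_mul_ncard_closeUpperParabolic_le (hL : 0 < L) (hz : 0 < z.im) (hN : 0 ≤ N)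
    (hP : ∀ q ∈ P, 0 < q.1 * q.2 ∧ ((q.1 * q.2 : ℕ) : ℝ) ≤ N) (hcard : #P ≤ N) :
    (∑ q ∈ P, (closeUpperParabolic z g δ L ((q.1 * q.2) ^ 2)).ncard : ℝ) ≤
      4 * N * (1 + √δ * N * z.im / L) := by
  calc _ ≤ #P • (2 * (1 + 2 * (√δ * N * z.im) / L)) :=
        Finset.sum_le_card_nsmul _ _ _ fun q hq ↦
          (ncard_closeUpperParabolic_le (hP q hq).1 hL hz).trans
            (by have := (hP q hq).2; gcongr)
    _ = #P * (2 + 4 * (√δ * N * z.im / L)) := by rw [nsmul_eq_mul]; ring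
    _ ≤ N * (4 + 4 * (√δ * N * z.im / L)) := by gcongr; norm_num
    _ = 4 * N * (1 + √δ * N * z.im / L) := by ring

theorem sum_mul_ncard_closeNonparabolic_le (hL : 0 < L) (hz : 1 ≤ z.im) (hδ₀ : 0 ≤ δ)
    (hδ₁ : δ ≤ 1) (hN : 1 ≤ N) (hτ : ∀ k : ℕ, (k : ℝ) ≤ 4 * N ^ 2 → #k.divisors ≤ τ)
    (hP : ∀ q ∈ P, 0 < q.1 * q.2 ∧ ((q.1 * q.2 : ℕ) : ℝ) ≤ N) :
    (∑ q ∈ P, (closeNonparabolic z g δ L ((q.1 * q.2) ^ 2)).ncard : ℝ) ≤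
      44 * τ ^ 2 * N * (1 + √δ * N * z.im / L + δ * N ^ 2 / L) := by
  have hτ₀ : 0 ≤ τ := by simpa using hτ 0 (by push_cast; positivity)
  have hNsq : N ≤ 4 * N ^ 2 := by nlinarith
  calc _ ≤ τ * ∑ n ∈ P.image (fun q ↦ q.1 * q.2),
          ((closeNonparabolic z g δ L (n ^ 2)).ncard : ℝ) :=
        sum_comp_mul_le_mul_sum_image
          (f := fun n ↦ ((closeNonparabolic z g δ L (n ^ 2)).ncard : ℝ))
          (fun _ ↦ Nat.cast_nonneg _)
          fun q hq ↦ ⟨(hP q hq).1.ne', hτ _ ((hP q hq).2.trans hNsq)⟩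
    _ ≤ τ * (2 * τ * (22 * N * (1 + √δ * N * z.im / L + δ * N ^ 2 / L))) := by
        gcongr
        exact sum_ncard_closeNonparabolic_le hL hz hδ₀ hδ₁ hN hτ (Finset.forall_mem_image.mpr hP)
    _ = _ := by ring

theorem sum_Mstar_le_of_card_divisors_le (hL : 0 < L) (hz : 1 ≤ z.im) (hδ₀ : 0 ≤ δ)
    (hδ₁ : δ ≤ 1) (hN : 1 ≤ N) (hτ : ∀ k : ℕ, (k : ℝ) ≤ 4 * N ^ 2 → #k.divisors ≤ τ)
    (hP : ∀ q ∈ P, 0 < q.1 * q.2 ∧ ((q.1 * q.2 : ℕ) : ℝ) ≤ N) (hcard : #P ≤ N) :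
    (∑ q ∈ P, Mstar z g δ L ((q.1 * q.2) ^ 2) : ℝ) ≤
      48 * τ ^ 2 * N * (1 + √δ * N * z.im / L + δ * N ^ 2 / L) := by
  have hz₀ : 0 < z.im := by linarith
  have hτ₁ : 1 ≤ τ ^ 2 :=
    one_le_pow₀ (by simpa using hτ 1 (by push_cast; nlinarith))
  have hδterm : 0 ≤ δ * N ^ 2 / L := by positivity
  set R : ℝ := 1 + √δ * N * z.im / L + δ * N ^ 2 / L
  calc _ ≤ ∑ q ∈ P, ((closeUpperParabolic z g δ L ((q.1 * q.2) ^ 2)).ncard +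
          (closeNonparabolic z g δ L ((q.1 * q.2) ^ 2)).ncard : ℝ) :=
        Finset.sum_le_sum fun q hq ↦ by
          exact_mod_cast Mstar_le_ncard_add_ncard hz₀ (pow_pos (hP q hq).1 2)
    _ ≤ 4 * N * (1 + √δ * N * z.im / L) + 44 * τ ^ 2 * N * R := by
        rw [Finset.sum_add_distrib]
        exact add_le_add (sum_mul_ncard_closeUpperParabolic_le hL hz₀ (by linarith) hP hcard)
          (sum_mul_ncard_closeNonparabolic_le hL hz hδ₀ hδ₁ hN hτ hP)
    _ ≤ 4 * N * R * τ ^ 2 + 44 * τ ^ 2 * N * R := by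
        refine add_le_add_left ((mul_le_mul_of_nonneg_left ?_ (by positivity)).trans
          (le_mul_of_one_le_right (by positivity) hτ₁)) _
        exact le_add_of_nonneg_right hδterm
    _ = 48 * τ ^ 2 * N * R := by ring

end SquareDeterminants

theorem mul_pos_and_mul_le_sq_of_mem_product {Pr : Finset ℕ} {Y : ℝ}
    (hPr : ∀ q ∈ Pr, 0 < q ∧ (q : ℝ) ≤ Y) :
    ∀ q ∈ Pr ×ˢ Pr, 0 < q.1 * q.2 ∧ ((q.1 * q.2 : ℕ) : ℝ) ≤ Y ^ 2 := by
  intro q hq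
  obtain ⟨h₁, h₂⟩ := Finset.mem_product.mp hq
  refine ⟨Nat.mul_pos (hPr _ h₁).1 (hPr _ h₂).1, ?_⟩
  rw [Nat.cast_mul, sq]
  exact mul_le_mul (hPr _ h₁).2 (hPr _ h₂).2 (Nat.cast_nonneg _)
    ((Nat.cast_nonneg _).trans (hPr _ h₁).2)

theorem card_product_self_le_sq {Pr : Finset ℕ} {Y : ℝ} (hY : 0 ≤ Y)
    (hPr : ∀ q ∈ Pr, 0 < q ∧ (q : ℝ) ≤ Y) : (#(Pr ×ˢ Pr) : ℝ) ≤ Y ^ 2 := by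
  have hsub : Pr ⊆ Finset.Icc 1 ⌊Y⌋₊ := fun q hq ↦
    Finset.mem_Icc.mpr ⟨(hPr q hq).1, Nat.le_floor (hPr q hq).2⟩
  have hcard : #Pr ≤ ⌊Y⌋₊ := by simpa using Finset.card_le_card hsub
  rw [Finset.card_product, ← sq, Nat.cast_pow]
  gcongr
  exact (Nat.cast_le.mpr hcard).trans (Nat.floor_le hY)

theorem stmt_16_general {ε : ℝ} (hε : 0 < ε) :
    ∃ C : ℝ, 0 < C ∧
      ∀ L : ℕ, 0 < L →
      ∀ z : ℂ, 1 ≤ z.im →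
      ∀ g : Matrix.SpecialLinearGroup (Fin 2) ℤ,
      ∀ δ : ℝ, 0 ≤ δ → δ ≤ 1 →
      ∀ X : ℝ, 1 ≤ X →
      ∀ Pr : Finset ℕ, (∀ q ∈ Pr, 0 < q ∧ (q : ℝ) ≤ 2 * X) →
        (∑ q ∈ Pr ×ˢ Pr, (Mstar z g δ L ((q.1 * q.2) ^ 2) : ℝ)) ≤
          C * X ^ (2 + ε) * (1 + √δ * X ^ 2 * z.im / L + δ * X ^ 4 / L) := by
  obtain ⟨K, hK, hdivisors⟩ := exists_card_divisors_le_mul_rpow (η := ε / 8) (by positivity)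
  refine ⟨3072 * (K * 64 ^ (ε / 8)) ^ 2, by positivity, ?_⟩
  intro L hL z hz g δ hδ₀ hδ₁ X hX Pr hPr
  have hX₀ : 0 < X := by linarith
  have hτ : ∀ k : ℕ, (k : ℝ) ≤ 4 * ((2 * X) ^ 2) ^ 2 →
      (#k.divisors : ℝ) ≤ K * 64 ^ (ε / 8) * X ^ (ε / 2) := by
    intro k hk
    have hpow : (4 * ((2 * X) ^ 2) ^ 2) ^ (ε / 8) = 64 ^ (ε / 8) * X ^ (ε / 2) := by
      rw [show 4 * ((2 * X) ^ 2) ^ 2 = 64 * X ^ (4 : ℝ) by norm_cast; ring,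
        Real.mul_rpow (by positivity) (by positivity), ← Real.rpow_mul hX₀.le]
      ring_nf
    calc (#k.divisors : ℝ) ≤ K * k ^ (ε / 8) := hdivisors k
      _ ≤ K * (4 * ((2 * X) ^ 2) ^ 2) ^ (ε / 8) := by gcongr
      _ = K * 64 ^ (ε / 8) * X ^ (ε / 2) := by rw [hpow, mul_assoc]
  have hXε : (X ^ (ε / 2)) ^ 2 * X ^ 2 = X ^ (2 + ε) := by
    rw [← Real.rpow_natCast, ← Real.rpow_mul hX₀.le, ← Real.rpow_natCast X 2,
      ← Real.rpow_add hX₀]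
    ring_nf
  have hscale : 1 + √δ * (2 * X) ^ 2 * z.im / L + δ * ((2 * X) ^ 2) ^ 2 / L ≤
      16 * (1 + √δ * X ^ 2 * z.im / L + δ * X ^ 4 / L) := by
    have hmain : 0 ≤ √δ * X ^ 2 * z.im / L := by positivity
    linear_combination 12 * hmain
  calc _ ≤ 48 * (K * 64 ^ (ε / 8) * X ^ (ε / 2)) ^ 2 * (2 * X) ^ 2 *
          (1 + √δ * (2 * X) ^ 2 * z.im / L + δ * ((2 * X) ^ 2) ^ 2 / L) :=
        sum_Mstar_le_of_card_divisors_le hL hz hδ₀ hδ₁ (one_le_pow₀ (by linarith)) hτ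
          (mul_pos_and_mul_le_sq_of_mem_product hPr) (card_product_self_le_sq (by linarith) hPr)
    _ ≤ 48 * (K * 64 ^ (ε / 8) * X ^ (ε / 2)) ^ 2 * (2 * X) ^ 2 *
          (16 * (1 + √δ * X ^ 2 * z.im / L + δ * X ^ 4 / L)) := by gcongr
    _ = _ := by rw [← hXε]; ring

/-- Counting bound for the non-parabolic part of the square-determinant sums. -/
theorem stmt_16 :
    ∀ ε : ℝ, 0 < ε →
    ∃ C : ℝ, 0 < C ∧
      ∀ (p : ℕ), p.Prime →
      ∀ l : ℕ, ∀ z : ℂ, 1 ≤ z.im →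
      ∀ g : Matrix.SpecialLinearGroup (Fin 2) ℤ,
      ∀ δ : ℝ, 0 < δ → δ < 1 →
      ∀ X : ℝ, 1 ≤ X →
      ∀ Pr : Finset ℕ, (∀ q ∈ Pr, Nat.Prime q ∧ X ≤ (q : ℝ) ∧ (q : ℝ) ≤ 2 * X) → p ∉ Pr →
        (∑ q ∈ Pr ×ˢ Pr, (Mstar z g δ (p ^ l) ((q.1 * q.2) ^ 2) : ℝ)) ≤
          C * X ^ ((2 : ℝ) + ε) *
            (1 + Real.sqrt δ * X ^ 2 * z.im / (p : ℝ) ^ l + δ * X ^ 4 / (p : ℝ) ^ l) := by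
  intro ε hε
  obtain ⟨C, hC, hbound⟩ := stmt_16_general hε
  refine ⟨C, hC, fun p hp l z hz g δ hδ₀ hδ₁ X hX Pr hPr _ ↦ ?_⟩
  exact_mod_cast hbound (p ^ l) (pow_pos hp.pos l) z hz g δ hδ₀.le hδ₁.le X hX Pr
    fun q hq ↦ ⟨(hPr q hq).1.pos, (hPr q hq).2.2⟩
end

section
/- For every ε > 0 there exists a constant C = C(ε) > 0 such that for every prime p, every integer l ≥ 0, every z ∈ ℍ with Im z ≥ 1, every g ∈ SL₂(ℤ), every δ' with 0 < δ' < 1, every real X ≥ 1, and every finite set 𝒫 of primes with 𝒫 ⊆ [X, 2X] and p ∉ 𝒫, one has Σ_{(l₁,l₂) ∈ 𝒫×𝒫} M_par(z, g; δ', p^l, (l₁·l₂)²) ≤ C·( X^{2+ε} + X^{4+ε}·(Im z)·√δ'/p^l ). -/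
/-!
A matrix with `tr² = 4 det = 4n²` is `±n + h N`, where `N` is the nilpotent matrix whose kernel is
spanned by a primitive vector `v = (r, s)`. Conjugation by `g` replaces `v` by `g⁻¹ v`, which is
again primitive, and the off-diagonal entries become `-h r'²` and `h s'²`; so `L` divides both of
them only if `L ∣ h`. Moreover `u(γ z, z) = (h |s z - r|² / (n Im z))²`. Writing `|h| = L j`, the
matrices with a given `j` correspond to points `s z - r` of the lattice `ℤ z + ℤ` with
`|s z - r|² ≤ n √δ Im z / (L j)`. As `Im z ≥ 1`, there are `O(n √δ / (L j))` of these with `s ≥ 1`,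
and the sum over `j` is harmonic.
-/

open Finset Matrix
open scoped Real

section ParabolicMatrix

/-- The matrix `e • 1 + h • N`, where `N` is the product of the column `v` and the row
`(v 1, -v 0)`, a nilpotent matrix killing `v`. These are the parabolic matrices with double
eigenvalue `e` and eigenvector `v`. -/
def parabolicMatrix {R : Type*} [CommRing R] (e h : R) (v : Fin 2 → R) : Matrix (Fin 2) (Fin 2) R :=
  !![e + h * v 0 * v 1, -(h * v 0 ^ 2); h * v 1 ^ 2, e - h * v 0 * v 1]

variable {R : Type*} [CommRing R]

lemma parabolicMatrix_conj (g : SpecialLinearGroup (Fin 2) R) (e h : R) (v : Fin 2 → R) :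
    (↑g⁻¹ : Matrix (Fin 2) (Fin 2) R) * parabolicMatrix e h v * g =
      parabolicMatrix e h ((↑g⁻¹ : Matrix (Fin 2) (Fin 2) R) *ᵥ v) := by
  have hdet : g 0 0 * g 1 1 - g 0 1 * g 1 0 = 1 := by
    rw [← det_fin_two, g.det_coe]
  rw [Matrix.SpecialLinearGroup.coe_inv, adjugate_fin_two]
  ext i j
  fin_cases i <;> fin_cases j <;>
    simp only [parabolicMatrix, mul_apply, mulVec, dotProduct, Fin.sum_univ_two, Fin.zero_eta,
      Fin.mk_one, Fin.isValue, of_apply, cons_val', cons_val_fin_one, cons_val_zero,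
      cons_val_one] <;>
    grind

lemma dvd_of_dvd_mul_sq_of_isCoprime {d h r s : R} (hrs : IsCoprime r s) (hr : d ∣ h * r ^ 2)
    (hs : d ∣ h * s ^ 2) : d ∣ h := by
  obtain ⟨x, y, hxy⟩ := hrs.pow (m := 2) (n := 2)
  have h_eq : h = x * (h * r ^ 2) + y * (h * s ^ 2) := by linear_combination -h * hxy
  rw [h_eq]
  exact (hr.mul_left x).add (hs.mul_left y)

lemma dvd_of_dvd_offDiag_conj_parabolicMatrix {d e h : R} {v : Fin 2 → R}
    (hv : IsCoprime (v 0) (v 1)) (g : SpecialLinearGroup (Fin 2) R)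
    (h01 : d ∣ ((↑g⁻¹ : Matrix (Fin 2) (Fin 2) R) * parabolicMatrix e h v * g) 0 1)
    (h10 : d ∣ ((↑g⁻¹ : Matrix (Fin 2) (Fin 2) R) * parabolicMatrix e h v * g) 1 0) : d ∣ h := by
  rw [parabolicMatrix_conj] at h01 h10
  exact dvd_of_dvd_mul_sq_of_isCoprime (hv.mulVecSL g⁻¹) ((dvd_neg (α := R)).1 h01) h10

end ParabolicMatrix

section Parametrization

lemma exists_primitive_of_sq_add_mul_eq_zero {a b c : ℤ} (h0 : a ^ 2 + b * c = 0) (hc : c ≠ 0) :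
    ∃ (h r : ℤ) (s : ℕ), 0 < s ∧ IsCoprime r s ∧
      a = h * r * s ∧ b = -(h * r ^ 2) ∧ c = h * s ^ 2 := by
  -- `r / s` is the reduced fraction of `a / c`.
  obtain ⟨k, ha, hc'⟩ := Rat.exists_eq_mul_div_num_and_eq_mul_div_den a hc
  set q : ℚ := (a : ℚ) / c
  have hcop : IsCoprime q.num q.den := q.isCoprime_num_den
  have hk : k ≠ 0 := by rintro rfl; simp_all
  have hden : (q.den : ℤ) ≠ 0 := mod_cast q.den_ne_zero
  have hkb : k * q.num ^ 2 = -b * q.den := mul_left_cancel₀ hk (by grind)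
  obtain ⟨h, rfl⟩ : (q.den : ℤ) ∣ k :=
    (hcop.symm.pow_right (n := 2)).dvd_of_dvd_mul_right (hkb ▸ dvd_mul_left _ _)
  have hb : b = -(h * q.num ^ 2) := mul_left_cancel₀ hden (by linear_combination hkb)
  exact ⟨h, q.num, q.den, q.den_pos, hcop, by linarith, hb, by linarith⟩

lemma exists_eq_parabolicMatrix {γ : Matrix (Fin 2) (Fin 2) ℤ} {n : ℕ} (hdet : γ.det = n ^ 2)
    (htr : γ.trace ^ 2 = 4 * n ^ 2) (hγ : γ 1 0 ≠ 0) :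
    ∃ (e h r : ℤ) (s : ℕ), e.natAbs = n ∧ h ≠ 0 ∧ 0 < s ∧ IsCoprime r s ∧
      γ = parabolicMatrix e h ![r, s] := by
  rw [det_fin_two] at hdet
  rw [trace_fin_two] at htr
  obtain ⟨e, he⟩ : (2 : ℤ) ∣ γ 0 0 + γ 1 1 :=
    (Int.pow_dvd_pow_iff two_ne_zero).1 ⟨n ^ 2, by linarith⟩
  have he_sq : e ^ 2 = (n : ℤ) ^ 2 := by grind
  obtain ⟨h, r, s, hs, hcop, h00, h01, h10⟩ :=
    exists_primitive_of_sq_add_mul_eq_zero (a := γ 0 0 - e) (b := γ 0 1) (c := γ 1 0)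
      (by grind) hγ
  refine ⟨e, h, r, s, by simpa using Int.natAbs_eq_iff_sq_eq.2 he_sq, ?_, hs, hcop, ?_⟩
  · rintro rfl
    simp [h10] at hγ
  · ext i j
    fin_cases i <;> fin_cases j <;>
      simp only [parabolicMatrix, Fin.zero_eta, Fin.mk_one, Fin.isValue, of_apply, cons_val',
        cons_val_fin_one, cons_val_zero, cons_val_one] <;>
      linarith

end Parametrization

section PointPairInvariant

variable {z : ℂ} {e h r s : ℤ}

lemma uInv_moeb_parabolicMatrix (hz : 0 < z.im) (he : e ≠ 0) :
    uInv (moeb (parabolicMatrix e h ![r, s]) z) z =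
      (h * Complex.normSq (s * z - r) / (e * z.im)) ^ 2 := by
  set D : ℂ := h * s ^ 2 * z + (e - h * r * s) with hD
  have hD_re : D.re = h * s ^ 2 * z.re + (e - h * r * s) := by simp [hD, pow_two]
  have hD_im : D.im = h * s ^ 2 * z.im := by simp [hD, pow_two]
  have hD_ne : D ≠ 0 := by
    intro h0
    have hhs : h = 0 ∨ s = 0 := by simpa [h0, hz.ne'] using hD_im
    have hDe : D = e := by rcases hhs with rfl | rfl <;> simp [hD]
    exact he (mod_cast hDe.symm.trans h0)
  have hmoeb : moeb (parabolicMatrix e h ![r, s]) z = ((e + h * r * s) * z - h * r ^ 2) / D := by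
    simp [moeb, parabolicMatrix, hD, sub_eq_add_neg]
  have hsub : moeb (parabolicMatrix e h ![r, s]) z - z = -(h * (s * z - r) ^ 2) / D := by
    rw [hmoeb]; field_simp; rw [hD]; ring
  have hnorm : 0 < Complex.normSq D := Complex.normSq_pos.2 hD_ne
  have him : (moeb (parabolicMatrix e h ![r, s]) z).im = e ^ 2 * z.im / Complex.normSq D := by
    rw [hmoeb, Complex.div_im]
    field_simp
    rw [hD_im, hD_re]
    simp only [pow_two, Complex.sub_im, Complex.mul_im, Complex.add_re, Complex.intCast_re,
      Complex.mul_re, Complex.intCast_im, mul_zero, sub_zero, zero_mul, add_zero, Complex.add_im,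
      Complex.sub_re]
    ring
  have heR : (e : ℝ) ≠ 0 := mod_cast he
  rw [uInv, hsub, him, ← Complex.normSq_eq_norm_sq, map_div₀, Complex.normSq_neg, map_mul, map_pow,
    Complex.normSq_intCast]
  field_simp

lemma abs_mul_normSq_le_of_uInv_le {ρ : ℝ} (hz : 0 < z.im) (he : e ≠ 0) (hρ : 0 ≤ ρ)
    (hu : uInv (moeb (parabolicMatrix e h ![r, s]) z) z ≤ ρ ^ 2) :
    |(h : ℝ)| * Complex.normSq (s * z - r) ≤ |(e : ℝ)| * z.im * ρ := by
  rw [uInv_moeb_parabolicMatrix hz he] at hu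
  have habs := abs_le_of_sq_le_sq hu hρ
  rwa [abs_div, abs_mul, abs_mul, abs_of_pos hz, abs_of_nonneg (Complex.normSq_nonneg _),
    div_le_iff₀' (by positivity)] at habs

end PointPairInvariant

section LatticePoints

lemma card_Icc_ceil_floor_le {a b : ℝ} (hab : a ≤ b) :
    (#(Icc ⌈a⌉ ⌊b⌋) : ℝ) ≤ b - a + 1 := by
  have hfloor := Int.floor_le b
  have hceil := Int.le_ceil a
  rw [Int.card_Icc, ← Int.cast_natCast, Int.toNat_eq_max]
  push_cast
  exact max_le (by linarith) (by linarith)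

/-- A finite set of pairs `(s, r)` with `s ≥ 1`, containing all those for which the lattice point
`s z - r` lies in the disc of radius `t` around the origin. -/
noncomputable def latticeBox (z : ℂ) (t : ℝ) : Finset (Σ _ : ℕ, ℤ) :=
  (Icc 1 ⌊t / z.im⌋₊).sigma fun s ↦ Icc ⌈s * z.re - t⌉ ⌊s * z.re + t⌋

variable {z : ℂ} {t : ℝ}

lemma normSq_natCast_mul_sub_intCast (z : ℂ) (s : ℕ) (r : ℤ) :
    Complex.normSq (s * z - r) = (s * z.re - r) ^ 2 + (s * z.im) ^ 2 := by
  simp [Complex.normSq_apply, pow_two]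

lemma mem_latticeBox {r : ℤ} {s : ℕ} (hz : 0 < z.im) (ht : 0 ≤ t) (hs : 0 < s)
    (h : Complex.normSq (s * z - r) ≤ t ^ 2) : ⟨s, r⟩ ∈ latticeBox z t := by
  rw [normSq_natCast_mul_sub_intCast] at h
  have him : s * z.im ≤ t := le_of_sq_le_sq (by nlinarith [sq_nonneg (s * z.re - r)]) ht
  have hre : |s * z.re - r| ≤ t := abs_le_of_sq_le_sq (by nlinarith [sq_nonneg (s * z.im)]) ht
  rw [abs_le] at hre
  rw [latticeBox, mem_sigma, mem_Icc, mem_Icc]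
  exact ⟨⟨hs, Nat.le_floor ((le_div_iff₀ hz).2 him)⟩,
    Int.ceil_le.2 (by linarith), Int.le_floor.2 (by linarith)⟩

lemma card_latticeBox_le (hz : 1 ≤ z.im) (ht : 0 ≤ t) :
    (#(latticeBox z t) : ℝ) ≤ 3 * t ^ 2 / z.im := by
  have hy : 0 < z.im := by linarith
  have hrow : ∀ s ∈ Icc 1 ⌊t / z.im⌋₊,
      (#(Icc ⌈s * z.re - t⌉ ⌊s * z.re + t⌋) : ℝ) ≤ 3 * t := by
    intro s hs
    obtain ⟨hs_pos, hs_le⟩ := mem_Icc.1 hs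
    have hone : 1 ≤ t / z.im := (Nat.one_le_floor_iff _).1 (hs_pos.trans hs_le)
    have ht_one : 1 ≤ t := hz.trans ((one_le_div hy).1 hone)
    linarith [card_Icc_ceil_floor_le (a := s * z.re - t) (b := s * z.re + t) (by linarith)]
  calc (#(latticeBox z t) : ℝ)
      = ∑ s ∈ Icc 1 ⌊t / z.im⌋₊, (#(Icc ⌈s * z.re - t⌉ ⌊s * z.re + t⌋) : ℝ) := by
        rw [latticeBox, card_sigma, Nat.cast_sum]
    _ ≤ ∑ _s ∈ Icc 1 ⌊t / z.im⌋₊, 3 * t := sum_le_sum hrow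
    _ = ⌊t / z.im⌋₊ * (3 * t) := by simp
    _ ≤ t / z.im * (3 * t) := by gcongr; exact Nat.floor_le (by positivity)
    _ = 3 * t ^ 2 / z.im := by ring

end LatticePoints

section Counting

lemma sum_Icc_floor_inv_le_one_add_posLog (w : ℝ) :
    ∑ j ∈ Icc 1 ⌊w⌋₊, (j : ℝ)⁻¹ ≤ 1 + log⁺ w := by
  rcases lt_or_ge w 1 with hw | hw
  · rw [Nat.floor_eq_zero.2 hw]
    simpa using zero_le_one.trans (le_add_of_nonneg_right Real.posLog_nonneg)
  · rw [Real.posLog_eq_log (hw.trans (le_abs_self w))]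
    simpa [harmonic_eq_sum_Icc] using harmonic_floor_le_one_add_log w hw

/-- A finite set of triples `(j, s, r)` with `j, s ≥ 1`, containing all those with
`j * |s z - r|² ≤ w * Im z`. With `w = n √δ / L` these parametrize, up to two signs, the matrices
counted by `M_par(z, g; δ, L, n²)`. -/
noncomputable def parabolicIndex (z : ℂ) (w : ℝ) : Finset (Σ _ : ℕ, Σ _ : ℕ, ℤ) :=
  (Icc 1 ⌊w⌋₊).sigma fun j ↦ latticeBox z √(w * z.im / j)

variable {z : ℂ}

lemma mem_parabolicIndex {w : ℝ} {j s : ℕ} {r : ℤ} (hz : 1 ≤ z.im) (hw : 0 ≤ w) (hj : 0 < j)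
    (hs : 0 < s) (h : j * Complex.normSq (s * z - r) ≤ w * z.im) :
    ⟨j, s, r⟩ ∈ parabolicIndex z w := by
  have hy : 0 < z.im := by linarith
  have hjw : (j : ℝ) ≤ w := by
    refine le_of_mul_le_mul_right (le_trans ?_ h) hy
    have hsy : z.im ≤ s * z.im := le_mul_of_one_le_left hy.le (mod_cast hs)
    rw [normSq_natCast_mul_sub_intCast]
    gcongr
    nlinarith [sq_nonneg (s * z.re - r)]
  rw [parabolicIndex, mem_sigma, mem_Icc]
  refine ⟨⟨hj, Nat.le_floor hjw⟩, mem_latticeBox hy (Real.sqrt_nonneg _) hs ?_⟩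
  rwa [Real.sq_sqrt (by positivity), le_div_iff₀' (by positivity)]

lemma card_parabolicIndex_le {w : ℝ} (hz : 1 ≤ z.im) (hw : 0 ≤ w) :
    (#(parabolicIndex z w) : ℝ) ≤ 3 * w * (1 + log⁺ w) := by
  have hy : 0 < z.im := by linarith
  calc (#(parabolicIndex z w) : ℝ)
      = ∑ j ∈ Icc 1 ⌊w⌋₊, (#(latticeBox z √(w * z.im / j)) : ℝ) := by
        rw [parabolicIndex, card_sigma, Nat.cast_sum]
    _ ≤ ∑ j ∈ Icc 1 ⌊w⌋₊, 3 * √(w * z.im / j) ^ 2 / z.im :=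
        sum_le_sum fun j _ ↦ card_latticeBox_le hz (Real.sqrt_nonneg _)
    _ = ∑ j ∈ Icc 1 ⌊w⌋₊, 3 * w * (j : ℝ)⁻¹ := by
        refine sum_congr rfl fun j _ ↦ ?_
        rw [Real.sq_sqrt (div_nonneg (mul_nonneg hw hy.le) j.cast_nonneg)]
        field_simp
    _ = 3 * w * ∑ j ∈ Icc 1 ⌊w⌋₊, (j : ℝ)⁻¹ := by rw [mul_sum]
    _ ≤ 3 * w * (1 + log⁺ w) := by
        gcongr
        exact sum_Icc_floor_inv_le_one_add_posLog w

lemma exists_mem_parabolicIndex {g : SpecialLinearGroup (Fin 2) ℤ} {ρ : ℝ} {L n : ℕ}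
    {γ : Matrix (Fin 2) (Fin 2) ℤ} (hz : 1 ≤ z.im) (hρ : 0 ≤ ρ) (hL : 0 < L) (hn : 0 < n)
    (hdet : γ.det = n ^ 2) (htr : γ.trace ^ 2 = 4 * n ^ 2) (hγ : γ 1 0 ≠ 0)
    (hu : uInv (moeb γ z) z ≤ ρ ^ 2)
    (h01 : (L : ℤ) ∣ ((↑g⁻¹ : Matrix (Fin 2) (Fin 2) ℤ) * γ * g) 0 1)
    (h10 : (L : ℤ) ∣ ((↑g⁻¹ : Matrix (Fin 2) (Fin 2) ℤ) * γ * g) 1 0) :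
    ∃ (ε₁ ε₂ : ℤˣ) (j s : ℕ) (r : ℤ), ⟨j, s, r⟩ ∈ parabolicIndex z (n * ρ / L) ∧
      γ = parabolicMatrix (n * (ε₁ : ℤ)) (L * (j * (ε₂ : ℤ))) ![r, s] := by
  obtain ⟨e, h, r, s, he, hh, hs, hcop, rfl⟩ := exists_eq_parabolicMatrix hdet htr hγ
  obtain ⟨k, rfl⟩ := dvd_of_dvd_offDiag_conj_parabolicMatrix hcop g h01 h10
  obtain ⟨ε₁, hε₁⟩ := (Int.associated_natAbs e).symm
  obtain ⟨ε₂, hε₂⟩ := (Int.associated_natAbs k).symm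
  refine ⟨ε₁, ε₂, k.natAbs, s, r, ?_, by rw [hε₂, ← hε₁, he]⟩
  have hk : k ≠ 0 := right_ne_zero_of_mul hh
  refine mem_parabolicIndex hz (by positivity) (Int.natAbs_pos.2 hk) hs ?_
  have hbound := abs_mul_normSq_le_of_uInv_le (s := s) (by linarith) (by grind) hρ hu
  have he_abs : |(e : ℝ)| = n := by rw [← he, Nat.cast_natAbs, Int.cast_abs]
  rw [he_abs, Int.cast_mul, abs_mul, Int.cast_natCast, Nat.abs_cast, Int.cast_natCast] at hbound
  rw [Nat.cast_natAbs, Int.cast_abs, div_mul_eq_mul_div, le_div_iff₀ (by positivity)]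
  linarith

theorem mpar_sq_le (hz : 1 ≤ z.im) (g : SpecialLinearGroup (Fin 2) ℤ) {ρ : ℝ} (hρ : 0 ≤ ρ)
    {L n : ℕ} (hL : 0 < L) (hn : 0 < n) :
    (Mpar z g (ρ ^ 2) L (n ^ 2) : ℝ) ≤ 12 * (n * ρ / L) * (1 + log⁺ (n * ρ / L)) := by
  classical
  set w : ℝ := n * ρ / L
  let signedIndex : Finset ((ℤˣ × ℤˣ) × Σ _ : ℕ, Σ _ : ℕ, ℤ) := univ ×ˢ parabolicIndex z w
  let toMatrix : (ℤˣ × ℤˣ) × (Σ _ : ℕ, Σ _ : ℕ, ℤ) → Matrix (Fin 2) (Fin 2) ℤ :=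
    fun ⟨(ε₁, ε₂), ⟨j, s, r⟩⟩ ↦ parabolicMatrix (n * (ε₁ : ℤ)) (L * (j * (ε₂ : ℤ))) ![r, s]
  have hMpar : Mpar z g (ρ ^ 2) L (n ^ 2) ≤ #(signedIndex.image toMatrix) := by
    rw [Mpar, ← Set.ncard_coe_finset]
    refine Set.ncard_le_ncard ?_ (finite_toSet _)
    rintro γ ⟨hdet, hu, ⟨h01, h10⟩, htr, hγ⟩
    obtain ⟨ε₁, ε₂, j, s, r, hmem, rfl⟩ := exists_mem_parabolicIndex hz hρ hL hn
      (mod_cast hdet) (mod_cast htr) hγ hu h01 h10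
    exact mem_coe.2 (mem_image.2
      ⟨((ε₁, ε₂), ⟨j, s, r⟩), mem_product.2 ⟨mem_univ _, hmem⟩, rfl⟩)
  have hcard : #signedIndex = 4 * #(parabolicIndex z w) := by
    simp [signedIndex, card_product]
  calc (Mpar z g (ρ ^ 2) L (n ^ 2) : ℝ)
      ≤ #signedIndex := mod_cast hMpar.trans card_image_le
    _ = 4 * #(parabolicIndex z w) := mod_cast hcard
    _ ≤ 4 * (3 * w * (1 + log⁺ w)) := by gcongr; exact card_parabolicIndex_le hz (by positivity)
    _ = 12 * w * (1 + log⁺ w) := by ring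

end Counting

section Summation

variable {ε X : ℝ}

lemma one_add_posLog_le {w : ℝ} (hε : 0 < ε) (hX : 1 ≤ X) (hw : 0 ≤ w) (hwX : w ≤ 4 * X ^ 2) :
    1 + log⁺ w ≤ (4 + 2 / ε) * X ^ ε := by
  have hone : 1 ≤ X ^ ε := Real.one_le_rpow hX hε.le
  have hlog_four : Real.log 4 ≤ 4 - 1 := Real.log_le_sub_one_of_pos (by norm_num)
  calc 1 + log⁺ w ≤ 1 + log⁺ (4 * X ^ 2) := by gcongr
    _ = 1 + (Real.log 4 + 2 * Real.log X) := by
        rw [Real.posLog_eq_log (by rw [abs_of_nonneg] <;> nlinarith),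
          Real.log_mul (by norm_num) (by positivity), Real.log_pow, Nat.cast_ofNat]
    _ ≤ 4 * 1 + 2 * (X ^ ε / ε) := by
        linarith [Real.log_le_rpow_div (zero_le_one.trans hX) hε]
    _ ≤ 4 * X ^ ε + 2 * (X ^ ε / ε) := by gcongr
    _ = (4 + 2 / ε) * X ^ ε := by ring

lemma mpar_sq_le_rpow {z : ℂ} {δ : ℝ} {L n : ℕ} (hε : 0 < ε) (hz : 1 ≤ z.im)
    (g : SpecialLinearGroup (Fin 2) ℤ) (hδ : 0 ≤ δ) (hδ1 : δ ≤ 1) (hL : 0 < L) (hn : 0 < n)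
    (hX : 1 ≤ X) (hnX : n ≤ 4 * X ^ 2) :
    (Mpar z g δ L (n ^ 2) : ℝ) ≤ 48 * (4 + 2 / ε) * (X ^ (2 + ε) * √δ / L) := by
  have hX0 : 0 < X := by linarith
  have hw_le : n * √δ / L ≤ 4 * X ^ 2 * √δ / L := by gcongr
  have hw_le' : n * √δ / L ≤ 4 * X ^ 2 := by
    refine hw_le.trans ((div_le_self (by positivity) (mod_cast hL)).trans ?_)
    exact mul_le_of_le_one_right (by positivity) (Real.sqrt_le_one.2 hδ1)
  calc (Mpar z g δ L (n ^ 2) : ℝ)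
      = Mpar z g (√δ ^ 2) L (n ^ 2) := by rw [Real.sq_sqrt hδ]
    _ ≤ 12 * (n * √δ / L) * (1 + log⁺ (n * √δ / L)) := mpar_sq_le hz g (Real.sqrt_nonneg δ) hL hn
    _ ≤ 12 * (4 * X ^ 2 * √δ / L) * ((4 + 2 / ε) * X ^ ε) := by
        gcongr
        · exact add_nonneg zero_le_one Real.posLog_nonneg
        · exact one_add_posLog_le hε hX (by positivity) hw_le'
    _ = 48 * (4 + 2 / ε) * (X ^ (2 + ε) * √δ / L) := by
        rw [Real.rpow_add hX0, Real.rpow_two]; ring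

lemma card_le_of_forall_pos_of_forall_le {S : Finset ℕ} {Y : ℝ} (hY : 0 ≤ Y)
    (hS : ∀ q ∈ S, 0 < q ∧ (q : ℝ) ≤ Y) : (#S : ℝ) ≤ Y := by
  have hsub : S ⊆ Icc 1 ⌊Y⌋₊ := fun q hq ↦ mem_Icc.2 ⟨(hS q hq).1, Nat.le_floor (hS q hq).2⟩
  calc (#S : ℝ) ≤ #(Icc 1 ⌊Y⌋₊) := mod_cast card_le_card hsub
    _ = ⌊Y⌋₊ := by simp
    _ ≤ Y := Nat.floor_le hY

end Summation

theorem stmt_17_general (ε : ℝ) (hε : 0 < ε) :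
    ∃ C : ℝ, 0 < C ∧
      ∀ L : ℕ, 0 < L →
      ∀ z : ℂ, 1 ≤ z.im →
      ∀ g : SpecialLinearGroup (Fin 2) ℤ,
      ∀ δ : ℝ, 0 ≤ δ → δ ≤ 1 →
      ∀ X : ℝ, 1 ≤ X →
      ∀ S : Finset ℕ, (∀ q ∈ S, 0 < q ∧ (q : ℝ) ≤ 2 * X) →
        ∑ q ∈ S ×ˢ S, (Mpar z g δ L ((q.1 * q.2) ^ 2) : ℝ) ≤ C * (X ^ (4 + ε) * √δ / L) := by
  refine ⟨192 * (4 + 2 / ε), by positivity, fun L hL z hz g δ hδ hδ1 X hX S hS ↦ ?_⟩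
  have hX0 : 0 < X := by linarith
  have hterm : ∀ q ∈ S ×ˢ S, (Mpar z g δ L ((q.1 * q.2) ^ 2) : ℝ) ≤
      48 * (4 + 2 / ε) * (X ^ (2 + ε) * √δ / L) := by
    intro q hq
    obtain ⟨h₁, h₂⟩ := mem_product.1 hq
    obtain ⟨hpos₁, hle₁⟩ := hS _ h₁
    obtain ⟨hpos₂, hle₂⟩ := hS _ h₂
    refine mpar_sq_le_rpow hε hz g hδ hδ1 hL (Nat.mul_pos hpos₁ hpos₂) hX ?_
    calc ((q.1 * q.2 : ℕ) : ℝ) = q.1 * q.2 := Nat.cast_mul _ _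
      _ ≤ (2 * X) * (2 * X) := by gcongr
      _ = 4 * X ^ 2 := by ring
  calc ∑ q ∈ S ×ˢ S, (Mpar z g δ L ((q.1 * q.2) ^ 2) : ℝ)
      ≤ #S * #S * (48 * (4 + 2 / ε) * (X ^ (2 + ε) * √δ / L)) := by
        simpa using sum_le_card_nsmul _ _ _ hterm
    _ ≤ (2 * X) * (2 * X) * (48 * (4 + 2 / ε) * (X ^ (2 + ε) * √δ / L)) := by
        gcongr <;> exact card_le_of_forall_pos_of_forall_le (by positivity) hS
    _ = 192 * (4 + 2 / ε) * (X ^ (4 + ε) * √δ / L) := by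
        rw [Real.rpow_add hX0, Real.rpow_add hX0]; norm_cast; ring

/-- Counting bound for the parabolic part of the square-determinant sums. -/
theorem stmt_17 :
    ∀ ε : ℝ, 0 < ε →
    ∃ C : ℝ, 0 < C ∧
      ∀ (p : ℕ), p.Prime →
      ∀ l : ℕ, ∀ z : ℂ, 1 ≤ z.im →
      ∀ g : Matrix.SpecialLinearGroup (Fin 2) ℤ,
      ∀ δ : ℝ, 0 < δ → δ < 1 →
      ∀ X : ℝ, 1 ≤ X →
      ∀ Pr : Finset ℕ, (∀ q ∈ Pr, Nat.Prime q ∧ X ≤ (q : ℝ) ∧ (q : ℝ) ≤ 2 * X) → p ∉ Pr →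
        (∑ q ∈ Pr ×ˢ Pr, (Mpar z g δ (p ^ l) ((q.1 * q.2) ^ 2) : ℝ)) ≤
          C * (X ^ ((2 : ℝ) + ε) + X ^ ((4 : ℝ) + ε) * z.im * Real.sqrt δ / (p : ℝ) ^ l) := by
  intro ε hε
  obtain ⟨C, hC, hbound⟩ := stmt_17_general ε hε
  refine ⟨C, hC, fun p hp l z hz g δ hδ hδ1 X hX Pr hPr _ ↦ ?_⟩
  calc ∑ q ∈ Pr ×ˢ Pr, (Mpar z g δ (p ^ l) ((q.1 * q.2) ^ 2) : ℝ)
      ≤ C * (X ^ (4 + ε) * √δ / (p ^ l : ℕ)) :=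
        hbound _ (pow_pos hp.pos l) z hz g δ hδ.le hδ1.le X hX Pr
          fun q hq ↦ ⟨(hPr q hq).1.pos, (hPr q hq).2.2⟩
    _ = C * (0 + X ^ (4 + ε) * 1 * √δ / (p : ℝ) ^ l) := by rw [Nat.cast_pow, mul_one, zero_add]
    _ ≤ C * (X ^ (2 + ε) + X ^ (4 + ε) * z.im * √δ / (p : ℝ) ^ l) := by gcongr; positivity
end

section
/- Let γ = [[a,b],[c,d]] ∈ M₂(ℝ) with m := det γ > 0, and let z ∈ ℍ. Then (a + d)² ≤ 2m·(2 + u(γ·z, z)) and (c·Im z)² ≤ m·(2 + u(γ·z, z)). -/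
/-- The Möbius action of a real matrix on the upper half-plane. -/
noncomputable def moebR (γ : Matrix (Fin 2) (Fin 2) ℝ) (z : ℂ) : ℂ :=
  (((γ 0 0 : ℝ) : ℂ) * z + ((γ 0 1 : ℝ) : ℂ)) / (((γ 1 0 : ℝ) : ℂ) * z + ((γ 1 1 : ℝ) : ℂ))

/-!
Conjugating by the affine map `w ↦ Im z · w + Re z`, which carries `i` to `z` and preserves `u`,
replaces `γ` by a matrix `δ` with the same trace and determinant and with lower left entry
`c · Im z`. At the point `i` the quantity `det δ · (2 + u(δ·i, i))` is the sum of the squares of the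
entries of `δ`, which bounds each squared entry and, by Cauchy–Schwarz on the diagonal, half the
squared trace.
-/

section SumOfSquares

variable {m n R : Type*} [Fintype m] [Fintype n] [Ring R] [LinearOrder R]
  [IsStrictOrderedRing R]

theorem sq_entry_le_sum_sq (M : Matrix m n R) (i : m) (j : n) : M i j ^ 2 ≤ ∑ k, ∑ l, M k l ^ 2 :=
  calc
    M i j ^ 2 ≤ ∑ l, M i l ^ 2 :=
      Finset.single_le_sum (fun l _ ↦ sq_nonneg (M i l)) (Finset.mem_univ j)
    _ ≤ ∑ k, ∑ l, M k l ^ 2 :=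
      Finset.single_le_sum (f := fun k ↦ ∑ l, M k l ^ 2)
        (fun k _ ↦ Finset.sum_nonneg fun l _ ↦ sq_nonneg (M k l)) (Finset.mem_univ i)

theorem sq_trace_le_card_mul_sum_sq (M : Matrix n n R) :
    M.trace ^ 2 ≤ Fintype.card n * ∑ i, ∑ j, M i j ^ 2 :=
  calc
    M.trace ^ 2 ≤ Fintype.card n * ∑ i, M i i ^ 2 := sq_sum_le_card_mul_sum_sq
    _ ≤ Fintype.card n * ∑ i, ∑ j, M i j ^ 2 := by
      gcongr with i
      exact Finset.single_le_sum (fun j _ ↦ sq_nonneg (M i j)) (Finset.mem_univ i)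

end SumOfSquares

section Moebius

/-- The factor of automorphy `j(γ, z) = cz + d`, the denominator of `moebR γ z`. -/
noncomputable def moebDenom (γ : Matrix (Fin 2) (Fin 2) ℝ) (z : ℂ) : ℂ :=
  (γ 1 0 : ℂ) * z + (γ 1 1 : ℂ)

variable {γ δ : Matrix (Fin 2) (Fin 2) ℝ} {z w : ℂ}

theorem moebDenom_ne_zero (hγ : γ.det ≠ 0) (hz : z.im ≠ 0) : moebDenom γ z ≠ 0 := by
  intro h
  have hc : γ 1 0 = 0 := by simpa [moebDenom, hz] using congrArg Complex.im h
  have hd : γ 1 1 = 0 := by simpa [moebDenom, hc] using congrArg Complex.re h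
  exact hγ (by simp [Matrix.det_fin_two, hc, hd])

theorem moebR_im (γ : Matrix (Fin 2) (Fin 2) ℝ) (z : ℂ) :
    (moebR γ z).im = γ.det * z.im / Complex.normSq (moebDenom γ z) := by
  rw [moebR, Complex.div_im, ← sub_div, Matrix.det_fin_two]
  simp only [Complex.add_im, Complex.mul_im, Complex.ofReal_re, Complex.ofReal_im, zero_mul,
    add_zero, Complex.add_re, Complex.mul_re, sub_zero, moebDenom]
  ring

theorem moebR_im_ne_zero (hγ : γ.det ≠ 0) (hz : z.im ≠ 0) : (moebR γ z).im ≠ 0 := by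
  rw [moebR_im]
  exact div_ne_zero (mul_ne_zero hγ hz) (Complex.normSq_pos.2 (moebDenom_ne_zero hγ hz)).ne'

theorem moebR_mul (hδ : moebDenom δ z ≠ 0) : moebR (γ * δ) z = moebR γ (moebR δ z) := by
  rw [moebDenom] at hδ
  simp only [moebR, Matrix.mul_apply, Fin.sum_univ_two, Complex.ofReal_add, Complex.ofReal_mul]
  rw [← mul_div_mul_right (_ * (_ / _) + _) _ hδ]
  congr 1 <;> field_simp <;> ring

theorem moebR_sub_moebR (hz : moebDenom γ z ≠ 0) (hw : moebDenom γ w ≠ 0) :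
    moebR γ z - moebR γ w = γ.det * (z - w) / (moebDenom γ z * moebDenom γ w) := by
  change _ / moebDenom γ z - _ / moebDenom γ w = _
  rw [div_sub_div _ _ hz hw, Matrix.det_fin_two]
  simp only [moebDenom]
  push_cast
  ring

theorem uInv_moebR_moebR (hγ : γ.det ≠ 0) (hz : z.im ≠ 0) (hw : w.im ≠ 0) :
    uInv (moebR γ z) (moebR γ w) = uInv z w := by
  have hjz := moebDenom_ne_zero hγ hz
  have hjw := moebDenom_ne_zero hγ hw
  have hjz' := Complex.normSq_eq_zero.not.2 hjz
  have hjw' := Complex.normSq_eq_zero.not.2 hjw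
  simp only [uInv, moebR_im, moebR_sub_moebR hjz hjw, ← Complex.normSq_eq_norm_sq, map_div₀,
    map_mul, Complex.normSq_ofReal]
  field_simp

theorem det_mul_two_add_uInv_moebR_I (hγ : γ.det ≠ 0) :
    γ.det * (2 + uInv (moebR γ Complex.I) Complex.I) = ∑ i, ∑ j, γ i j ^ 2 := by
  have hj : moebDenom γ Complex.I ≠ 0 := moebDenom_ne_zero hγ (by simp)
  have hj' := Complex.normSq_eq_zero.not.2 hj
  have hsub : moebR γ Complex.I - Complex.I =
      (⟨γ 0 1 + γ 1 0, γ 0 0 - γ 1 1⟩ : ℂ) / moebDenom γ Complex.I := by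
    change _ / moebDenom γ Complex.I - _ = _
    rw [div_sub' hj]
    congr 1
    apply Complex.ext <;> simp [moebDenom]
  have hu : γ.det * uInv (moebR γ Complex.I) Complex.I =
      (γ 0 1 + γ 1 0) ^ 2 + (γ 0 0 - γ 1 1) ^ 2 := by
    rw [uInv, moebR_im, hsub, ← Complex.normSq_eq_norm_sq, map_div₀, Complex.normSq_mk,
      Complex.I_im]
    field_simp
  rw [mul_add, hu, Matrix.det_fin_two]
  simp only [Fin.sum_univ_two]
  ring

end Moebius

section Conjugation

/-- The matrix of the real affine map `w ↦ Im z · w + Re z`, which carries `i` to `z`. -/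
def affineFromI (z : ℂ) : Matrix (Fin 2) (Fin 2) ℝ := !![z.im, z.re; 0, 1]

/-- The conjugate of `γ` by `affineFromI z`, whose action relative to `i` mirrors that of `γ`
relative to `z`. The matrix inverse is the true one only when `z.im ≠ 0`. -/
noncomputable def conjToI (γ : Matrix (Fin 2) (Fin 2) ℝ) (z : ℂ) : Matrix (Fin 2) (Fin 2) ℝ :=
  (affineFromI z)⁻¹ * γ * affineFromI z

variable {γ : Matrix (Fin 2) (Fin 2) ℝ} {z : ℂ}

theorem det_affineFromI (z : ℂ) : (affineFromI z).det = z.im := by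
  simp [affineFromI, Matrix.det_fin_two]

theorem isUnit_det_affineFromI (hz : z.im ≠ 0) : IsUnit (affineFromI z).det := by
  rwa [det_affineFromI, isUnit_iff_ne_zero]

theorem moebR_affineFromI_I (z : ℂ) : moebR (affineFromI z) Complex.I = z := by
  apply Complex.ext <;> simp [moebR, affineFromI]

theorem det_conjToI (γ : Matrix (Fin 2) (Fin 2) ℝ) (hz : z.im ≠ 0) :
    (conjToI γ z).det = γ.det :=
  Matrix.det_conj' ((Matrix.isUnit_iff_isUnit_det _).2 (isUnit_det_affineFromI hz)) γ

theorem trace_conjToI (γ : Matrix (Fin 2) (Fin 2) ℝ) (hz : z.im ≠ 0) :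
    (conjToI γ z).trace = γ.trace := by
  rw [conjToI, Matrix.trace_mul_comm, Matrix.mul_nonsing_inv_cancel_left _ _
    (isUnit_det_affineFromI hz)]

theorem conjToI_apply_one_zero (γ : Matrix (Fin 2) (Fin 2) ℝ) (hz : z.im ≠ 0) :
    conjToI γ z 1 0 = γ 1 0 * z.im := by
  simp [conjToI, affineFromI, Matrix.inv_def, Matrix.adjugate_fin_two, Matrix.vecMul_eq_sum, hz]

theorem moebR_eq_moebR_affineFromI_conjToI (hγ : γ.det ≠ 0) (hz : z.im ≠ 0) :
    moebR γ z = moebR (affineFromI z) (moebR (conjToI γ z) Complex.I) := by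
  have hI : Complex.I.im ≠ 0 := by simp
  have hcomm : affineFromI z * conjToI γ z = γ * affineFromI z := by
    rw [conjToI, mul_assoc, Matrix.mul_nonsing_inv_cancel_left _ _ (isUnit_det_affineFromI hz)]
  calc
    moebR γ z = moebR γ (moebR (affineFromI z) Complex.I) := by rw [moebR_affineFromI_I]
    _ = moebR (γ * affineFromI z) Complex.I :=
      (moebR_mul (moebDenom_ne_zero (by rwa [det_affineFromI]) hI)).symm
    _ = moebR (affineFromI z * conjToI γ z) Complex.I := by rw [hcomm]
    _ = moebR (affineFromI z) (moebR (conjToI γ z) Complex.I) :=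
      moebR_mul (moebDenom_ne_zero (by rwa [det_conjToI γ hz]) hI)

theorem uInv_moebR_self_eq_conjToI (hγ : γ.det ≠ 0) (hz : z.im ≠ 0) :
    uInv (moebR γ z) z = uInv (moebR (conjToI γ z) Complex.I) Complex.I := by
  have hI : Complex.I.im ≠ 0 := by simp
  have hconj : (conjToI γ z).det ≠ 0 := by rwa [det_conjToI γ hz]
  have haff : (affineFromI z).det ≠ 0 := by rwa [det_affineFromI]
  rw [← uInv_moebR_moebR haff (moebR_im_ne_zero hconj hI) hI,
    ← moebR_eq_moebR_affineFromI_conjToI hγ hz, moebR_affineFromI_I]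

theorem det_mul_two_add_uInv_moebR_self (hγ : γ.det ≠ 0) (hz : z.im ≠ 0) :
    γ.det * (2 + uInv (moebR γ z) z) = ∑ i, ∑ j, conjToI γ z i j ^ 2 := by
  rw [uInv_moebR_self_eq_conjToI hγ hz, ← det_conjToI γ hz]
  exact det_mul_two_add_uInv_moebR_I (by rwa [det_conjToI γ hz])

end Conjugation

theorem stmt_19_general (γ : Matrix (Fin 2) (Fin 2) ℝ) (hm : γ.det ≠ 0) (z : ℂ) (hz : z.im ≠ 0) :
    (γ 0 0 + γ 1 1) ^ 2 ≤ 2 * γ.det * (2 + uInv (moebR γ z) z) ∧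
    (γ 1 0 * z.im) ^ 2 ≤ γ.det * (2 + uInv (moebR γ z) z) := by
  rw [mul_assoc, det_mul_two_add_uInv_moebR_self hm hz, ← Matrix.trace_fin_two,
    ← trace_conjToI γ hz, ← conjToI_apply_one_zero γ hz]
  exact ⟨by simpa only [Fintype.card_fin, Nat.cast_ofNat] using
    sq_trace_le_card_mul_sum_sq (conjToI γ z), sq_entry_le_sum_sq _ 1 0⟩

/-- For `γ = [[a,b],[c,d]] ∈ M₂(ℝ)` with `m = det γ > 0` and `z ∈ ℍ`:
`(a+d)² ≤ 2m(2 + u(γ·z, z))` and `(c·Im z)² ≤ m(2 + u(γ·z, z))`. -/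
theorem stmt_19 (γ : Matrix (Fin 2) (Fin 2) ℝ) (hm : 0 < γ.det) (z : ℂ) (hz : 0 < z.im) :
    (γ 0 0 + γ 1 1) ^ 2 ≤ 2 * γ.det * (2 + uInv (moebR γ z) z) ∧
    (γ 1 0 * z.im) ^ 2 ≤ γ.det * (2 + uInv (moebR γ z) z) :=
  stmt_19_general γ hm.ne' z hz.ne'
end
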